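/- arXiv:2305.07757 — 6 statements merged into one kernel-verified Lean document; each statement's English description precedes it below -/
import Mathlib

section
/- Let Q(z,z̄) = Σ_{α,β} c_{αβ} z^α z̄^β be a real-valued polynomial function on ℂⁿ (so c_{αβ} = conj(c_{βα})), homogeneous of total degree d ≥ 2 in (z,z̄), with no pluriharmonic terms (c_{αβ} = 0 whenever α = 0 or β = 0). Let λ₁,…,λₙ ∈ ℂ and J₁ ⊆ {1,…,n−1} satisfy λ_{j+1} = λ_j for every j ∈ J₁ (Jordan normal form condition), and define the linear holomorphic vector fields X = Σ_j λ_j z_j ∂/∂z_j and Z = Σ_{j∈J₁} z_j ∂/∂z_{j+1}, acting on Q through the holomorphic partial derivatives only, i.e. X(Q)(z) = Σ_j λ_j z_j (∂Q/∂z_j)(z,z̄) and Z(Q)(z) = Σ_{j∈J₁} z_j (∂Q/∂z_{j+1})(z,z̄). Set W = X + Z. Then W(Q) = Q holds identically on ℂⁿ if and only if X(Q) = Q and Z(Q) = 0 hold identically on ℂⁿ. -/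
open Complex

noncomputable section

/-- `QEval c z = Σ_{α,β} c_{αβ} z^α z̄^β`, the real-valued polynomial with
coefficient family `c`. -/
def QEval {n : ℕ} (c : ((Fin n →₀ ℕ) × (Fin n →₀ ℕ)) →₀ ℂ) (z : Fin n → ℂ) : ℂ :=
  c.sum fun p a => a * (∏ j, z j ^ p.1 j) * ∏ j, (starRingEnd ℂ) (z j) ^ p.2 j

/-- The holomorphic partial derivative `∂Q/∂z_k` of `QEval c`. -/
def QDeriv {n : ℕ} (c : ((Fin n →₀ ℕ) × (Fin n →₀ ℕ)) →₀ ℂ) (k : Fin n) (z : Fin n → ℂ) : ℂ :=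
  c.sum fun p a =>
    a * (p.1 k : ℂ) * (∏ j, z j ^ (((p.1 - Finsupp.single k 1) : Fin n →₀ ℕ) j)) *
      ∏ j, (starRingEnd ℂ) (z j) ^ p.2 j

/-- Coefficient family of `z_j ∂Q/∂z_k`, where `Q = QEval c`. -/
def shiftCoeff {n : ℕ} (j k : Fin n) (c : ((Fin n →₀ ℕ) × (Fin n →₀ ℕ)) →₀ ℂ) :
    ((Fin n →₀ ℕ) × (Fin n →₀ ℕ)) →₀ ℂ :=
  ∑ p ∈ c.support,
    Finsupp.single (p.1 - Finsupp.single k 1 + Finsupp.single j 1, p.2) (c p * (p.1 k : ℂ))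

lemma QEval_add {n : ℕ} (c c' : ((Fin n →₀ ℕ) × (Fin n →₀ ℕ)) →₀ ℂ) (z : Fin n → ℂ) :
    QEval (c + c') z = QEval c z + QEval c' z :=
  Finsupp.sum_add_index' (by simp) (by intros; ring)

lemma QEval_smul {n : ℕ} (r : ℂ) (c : ((Fin n →₀ ℕ) × (Fin n →₀ ℕ)) →₀ ℂ) (z : Fin n → ℂ) :
    QEval (r • c) z = r * QEval c z := by
  unfold QEval
  rw [Finsupp.sum_smul_index (by simp), Finsupp.mul_sum]
  simp only [mul_assoc]

lemma QEval_zero {n : ℕ} (z : Fin n → ℂ) : QEval (0 : _ →₀ ℂ) z = 0 :=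
  Finsupp.sum_zero_index

lemma QEval_sum {n : ℕ} {ι : Type*} (s : Finset ι)
    (f : ι → ((Fin n →₀ ℕ) × (Fin n →₀ ℕ)) →₀ ℂ) (z : Fin n → ℂ) :
    QEval (∑ i ∈ s, f i) z = ∑ i ∈ s, QEval (f i) z := by
  classical
  induction s using Finset.induction_on with
  | empty => simp [QEval_zero]
  | insert i s hi ih => rw [Finset.sum_insert hi, Finset.sum_insert hi, QEval_add, ih]

lemma QEval_shiftCoeff {n : ℕ} (j k : Fin n) (c : ((Fin n →₀ ℕ) × (Fin n →₀ ℕ)) →₀ ℂ)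
    (z : Fin n → ℂ) : QEval (shiftCoeff j k c) z = z j * QDeriv c k z := by
  rw [shiftCoeff, QEval_sum, QDeriv, Finsupp.sum, Finset.mul_sum]
  refine Finset.sum_congr rfl fun p _ => ?_
  rw [QEval, Finsupp.sum_single_index (by simp)]
  have h : ∏ i, z i ^ (Finsupp.single j 1 : Fin n →₀ ℕ) i = z j := by
    rw [Finset.prod_eq_single j] <;> simp +contextual [eq_comm]
  simp only [Finsupp.add_apply, pow_add, Finset.prod_mul_distrib, h]
  ring

/-- The family `c` as a polynomial in `z` and `z̄`, taken as independent variables. -/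
def polarization {n : ℕ} (c : ((Fin n →₀ ℕ) × (Fin n →₀ ℕ)) →₀ ℂ) :
    MvPolynomial (Fin n ⊕ Fin n) ℂ :=
  ∑ p ∈ c.support, MvPolynomial.monomial (Finsupp.sumFinsuppEquivProdFinsupp.symm p) (c p)

lemma coeff_polarization {n : ℕ} (c : ((Fin n →₀ ℕ) × (Fin n →₀ ℕ)) →₀ ℂ)
    (p : (Fin n →₀ ℕ) × (Fin n →₀ ℕ)) :
    (polarization c).coeff (Finsupp.sumFinsuppEquivProdFinsupp.symm p) = c p := by
  classical
  simp only [polarization, MvPolynomial.coeff_sum, MvPolynomial.coeff_monomial,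
    EmbeddingLike.apply_eq_iff_eq]
  simp +contextual [eq_comm]

lemma eval_polarization {n : ℕ} (c : ((Fin n →₀ ℕ) × (Fin n →₀ ℕ)) →₀ ℂ) (z : Fin n → ℂ) :
    MvPolynomial.eval (Sum.elim z fun j => (starRingEnd ℂ) (z j)) (polarization c)
      = QEval c z := by
  rw [polarization, map_sum, QEval, Finsupp.sum]
  refine Finset.sum_congr rfl fun p _ => ?_
  rw [MvPolynomial.eval_monomial, Finsupp.prod_fintype _ _ (by simp), Fintype.prod_sum_type]
  simp [mul_assoc]

/-- A polynomial vanishing on the totally real subspace `{(z, z̄)}` is zero. -/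
lemma MvPolynomial.eq_zero_of_eval_conj {n : ℕ} (P : MvPolynomial (Fin n ⊕ Fin n) ℂ)
    (h : ∀ z : Fin n → ℂ,
      MvPolynomial.eval (Sum.elim z fun j => (starRingEnd ℂ) (z j)) P = 0) : P = 0 := by
  let φ : Fin n ⊕ Fin n → MvPolynomial (Fin n ⊕ Fin n) ℂ :=
    Sum.elim (fun j => X (Sum.inl j) + C I * X (Sum.inr j))
      fun j => X (Sum.inl j) - C I * X (Sum.inr j)
  have key (x : Fin n ⊕ Fin n → ℂ) : eval x (bind₁ φ P) =
      eval (Sum.elim (fun j => x (Sum.inl j) + I * x (Sum.inr j))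
        fun j => x (Sum.inl j) - I * x (Sum.inr j)) P := by
    rw [← MvPolynomial.coe_aeval_eq_eval, RingHom.coe_coe, aeval_bind₁,
      ← MvPolynomial.coe_aeval_eq_eval, RingHom.coe_coe]
    congr 2
    ext (j | j) <;> simp [φ]
  have hR : bind₁ φ P = 0 := by
    refine MvPolynomial.funext_set (fun _ => Set.range ((↑) : ℝ → ℂ))
      (fun _ => Set.infinite_range_of_injective Complex.ofReal_injective) fun x hx => ?_
    have hconj (i) : (starRingEnd ℂ) (x i) = x i := by
      obtain ⟨r, hr⟩ := hx i (Set.mem_univ i)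
      rw [← hr, Complex.conj_ofReal]
    rw [key, map_zero, ← h fun j => x (Sum.inl j) + I * x (Sum.inr j)]
    simp [hconj, sub_eq_add_neg]
  refine MvPolynomial.funext fun y => ?_
  have h2 := key (Sum.elim (fun j => (y (Sum.inl j) + y (Sum.inr j)) / 2)
    fun j => -I * (y (Sum.inl j) - y (Sum.inr j)) / 2)
  rw [hR, map_zero] at h2
  rw [map_zero, h2]
  congr 2
  ext (j | j) <;> simp only [Sum.elim_inl, Sum.elim_inr]
  · linear_combination (y (Sum.inl j) - y (Sum.inr j)) / 2 * Complex.I_sq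
  · linear_combination -(y (Sum.inl j) - y (Sum.inr j)) / 2 * Complex.I_sq

lemma eq_zero_of_QEval_eq_zero {n : ℕ} (c : ((Fin n →₀ ℕ) × (Fin n →₀ ℕ)) →₀ ℂ)
    (h : ∀ z, QEval c z = 0) : c = 0 := by
  have hP := MvPolynomial.eq_zero_of_eval_conj (polarization c) fun z => by
    rw [eval_polarization, h]
  ext p
  rw [← coeff_polarization, hP, MvPolynomial.coeff_zero, Finsupp.zero_apply]

lemma shiftCoeff_self_apply {n : ℕ} (j : Fin n) (c : ((Fin n →₀ ℕ) × (Fin n →₀ ℕ)) →₀ ℂ)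
    (q : (Fin n →₀ ℕ) × (Fin n →₀ ℕ)) : shiftCoeff j j c q = q.1 j * c q := by
  classical
  have h : shiftCoeff j j c = ∑ p ∈ c.support, Finsupp.single p (c p * (p.1 j : ℂ)) := by
    refine Finset.sum_congr rfl fun p _ => ?_
    rcases Nat.eq_zero_or_pos (p.1 j) with h0 | h0
    · simp [h0]
    · rw [tsub_add_cancel_of_le (Finsupp.single_le_iff.2 h0)]
  rw [h, Finsupp.finsetSum_apply]
  simp +contextual [Finsupp.single_apply, mul_comm]

/-- A nonzero coefficient of `z_j ∂Q/∂z_k` comes from a monomial of `Q` with one more `z_k` and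
one fewer `z_j`. -/
lemma exists_of_shiftCoeff_ne_zero {n : ℕ} {j k : Fin n}
    {c : ((Fin n →₀ ℕ) × (Fin n →₀ ℕ)) →₀ ℂ} {q : (Fin n →₀ ℕ) × (Fin n →₀ ℕ)}
    (h : shiftCoeff j k c q ≠ 0) :
    ∃ p, c p ≠ 0 ∧ p.1 + Finsupp.single j 1 = q.1 + Finsupp.single k 1 := by
  rw [shiftCoeff, Finsupp.finsetSum_apply] at h
  obtain ⟨p, hp, hne⟩ := Finset.exists_ne_zero_of_sum_ne_zero h
  have hq : (p.1 - Finsupp.single k 1 + Finsupp.single j 1, p.2) = q := by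
    by_contra hcon
    exact hne (Finsupp.single_eq_of_ne' hcon)
  have hk : p.1 k ≠ 0 := by
    intro h0
    simp [h0] at hne
  refine ⟨p, Finsupp.mem_support_iff.1 hp, ?_⟩
  rw [← hq, add_right_comm,
    tsub_add_cancel_of_le (Finsupp.single_le_iff.2 (Nat.one_le_iff_ne_zero.2 hk))]

/-- Every monomial of a solution of `W(Q) = Q` has `X`-eigenvalue one. -/
lemma eigenvalue_eq_one {n : ℕ} [NeZero n] (c : ((Fin n →₀ ℕ) × (Fin n →₀ ℕ)) →₀ ℂ)
    (lam : Fin n → ℂ) (J₁ : Finset (Fin n)) (hJ : ∀ j ∈ J₁, (j : ℕ) + 1 < n)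
    (hJordan : ∀ j ∈ J₁, lam (j + 1) = lam j)
    (hW : ∀ q, (∑ j, lam j * q.1 j) * c q + ∑ j ∈ J₁, shiftCoeff j (j + 1) c q = c q)
    {q : (Fin n →₀ ℕ) × (Fin n →₀ ℕ)} (hq : c q ≠ 0) : ∑ j, lam j * (q.1 j : ℂ) = 1 := by
  classical
  by_contra hne
  obtain ⟨p, hp, hmax⟩ := Finset.exists_max_image
    (c.support.filter fun p => ∑ j, lam j * (p.1 j : ℂ) ≠ 1)
    (fun p => ∑ j : Fin n, (j : ℕ) * p.1 j)
    ⟨q, Finset.mem_filter.2 ⟨Finsupp.mem_support_iff.2 hq, hne⟩⟩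
  obtain ⟨hpc, hp1⟩ := Finset.mem_filter.1 hp
  have hZ : ∑ j ∈ J₁, shiftCoeff j (j + 1) c p = 0 := by
    refine Finset.sum_eq_zero fun j hj => ?_
    by_contra hs
    obtain ⟨r, hr, hrp⟩ := exists_of_shiftCoeff_ne_zero hs
    have hval : ((j + 1 : Fin n) : ℕ) = j + 1 := Fin.val_add_one_of_lt' (hJ j hj)
    have hcoord (i : Fin n) : r.1 i + (if j = i then 1 else 0)
        = p.1 i + if j + 1 = i then 1 else 0 := by
      simpa [Finsupp.single_apply] using DFunLike.congr_fun hrp i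
    have hlam : ∑ i, lam i * (r.1 i : ℂ) = ∑ i, lam i * (p.1 i : ℂ) := by
      have h : ∑ i, lam i * ((r.1 i + (if j = i then 1 else 0) : ℕ) : ℂ)
          = ∑ i, lam i * ((p.1 i + (if j + 1 = i then 1 else 0) : ℕ) : ℂ) := by
        simp only [hcoord]
      simpa [mul_add, Finset.sum_add_distrib, hJordan j hj] using h
    have hwt : ∑ i : Fin n, (i : ℕ) * r.1 i = ∑ i : Fin n, (i : ℕ) * p.1 i + 1 := by
      have h : ∑ i : Fin n, (i : ℕ) * (r.1 i + (if j = i then 1 else 0))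
          = ∑ i : Fin n, (i : ℕ) * (p.1 i + (if j + 1 = i then 1 else 0)) := by
        simp only [hcoord]
      simp only [mul_add, Finset.sum_add_distrib, mul_ite, mul_one, mul_zero,
        Finset.sum_ite_eq, Finset.mem_univ, if_true, hval] at h
      omega
    have := hmax r (Finset.mem_filter.2 ⟨Finsupp.mem_support_iff.2 hr, hlam ▸ hp1⟩)
    omega
  have h := hW p
  rw [hZ, add_zero] at h
  exact hp1 (mul_right_cancel₀ (Finsupp.mem_support_iff.1 hpc) (h.trans (one_mul _).symm))

/-- For a real-valued homogeneous polynomial `Q(z,z̄)` of degree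
`d ≥ 2` without pluriharmonic terms, and `W = X + Z` a linear holomorphic vector
field in Jordan normal form with diagonal part `X = Σ λ_j z_j ∂/∂z_j` and nilpotent
part `Z = Σ_{j∈J₁} z_j ∂/∂z_{j+1}`, one has `W(Q) = Q` iff `X(Q) = Q` and `Z(Q) = 0`. -/
theorem stmt0 (n : ℕ) [NeZero n] (d : ℕ) (hd : 2 ≤ d)
    (c : ((Fin n →₀ ℕ) × (Fin n →₀ ℕ)) →₀ ℂ)
    (hreal : ∀ α β : Fin n →₀ ℕ, c (α, β) = (starRingEnd ℂ) (c (β, α)))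
    (hhom : ∀ p ∈ c.support, (p.1.sum fun _ e => e) + (p.2.sum fun _ e => e) = d)
    (hnoplh : ∀ p ∈ c.support, p.1 ≠ 0 ∧ p.2 ≠ 0)
    (lam : Fin n → ℂ) (J₁ : Finset (Fin n))
    (hJ : ∀ j ∈ J₁, (j : ℕ) + 1 < n)
    (hJordan : ∀ j ∈ J₁, lam (j + 1) = lam j) :
    (∀ z : Fin n → ℂ,
        (∑ j, lam j * z j * QDeriv c j z) + (∑ j ∈ J₁, z j * QDeriv c (j + 1) z)
          = QEval c z)
      ↔ ((∀ z : Fin n → ℂ, (∑ j, lam j * z j * QDeriv c j z) = QEval c z) ∧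
          ∀ z : Fin n → ℂ, (∑ j ∈ J₁, z j * QDeriv c (j + 1) z) = 0) := by
  refine ⟨fun h => ?_, fun h z => by rw [h.1, h.2, add_zero]⟩
  have hX (z : Fin n → ℂ) : QEval (∑ j, lam j • shiftCoeff j j c) z
      = ∑ j, lam j * z j * QDeriv c j z := by
    simp only [QEval_sum, QEval_smul, QEval_shiftCoeff, mul_assoc]
  have hZ (z : Fin n → ℂ) : QEval (∑ j ∈ J₁, shiftCoeff j (j + 1) c) z
      = ∑ j ∈ J₁, z j * QDeriv c (j + 1) z := by
    simp only [QEval_sum, QEval_shiftCoeff]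
  have hXapply (q) : (∑ j, lam j • shiftCoeff j j c) q = (∑ j, lam j * q.1 j) * c q := by
    simp [Finsupp.finsetSum_apply, shiftCoeff_self_apply, Finset.sum_mul, mul_assoc]
  have hW : ∑ j, lam j • shiftCoeff j j c + ∑ j ∈ J₁, shiftCoeff j (j + 1) c + (-1 : ℂ) • c
      = 0 := by
    refine eq_zero_of_QEval_eq_zero _ fun z => ?_
    rw [QEval_add, QEval_add, QEval_smul, hX, hZ, h z]
    ring
  have heigen : ∑ j, lam j • shiftCoeff j j c = c := by
    ext q
    rw [hXapply]
    by_cases hq : c q = 0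
    · rw [hq, mul_zero]
    · rw [eigenvalue_eq_one c lam J₁ hJ hJordan (fun q => ?_) hq, one_mul]
      have hWq := DFunLike.congr_fun hW q
      rw [Finsupp.add_apply, Finsupp.add_apply, hXapply, Finsupp.finsetSum_apply,
        Finsupp.smul_apply, Finsupp.zero_apply, smul_eq_mul] at hWq
      linear_combination hWq
  have hXQ (z : Fin n → ℂ) : ∑ j, lam j * z j * QDeriv c j z = QEval c z := by
    rw [← hX, heigen]
  exact ⟨hXQ, fun z => by linear_combination h z - hXQ z⟩
end
end

section
/- Let Q(z,z̄) be the real-valued polynomial on ℂ³ given by Q(z,z̄) = (z₁²z₂z₃³ + z₁z₂⁴z₃)·z̄₁² + z₁²·(z̄₁²z̄₂z̄₃³ + z̄₁z̄₂⁴z̄₃) + z₁²z₂²z̄₁²z̄₂² (homogeneous of degree d = 8), and let M_Q = {(z,w) ∈ ℂ³×ℂ : Im w = Q(z,z̄)}. Then (1) the vector field X = 11i·z₁ ∂/∂z₁ + 3i·z₂ ∂/∂z₂ − i·z₃ ∂/∂z₃ is a rotation of M_Q (so M_Q possesses a nonzero imaginary diagonal rotation), and (2) g₁ = {0}, i.e.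 the only infinitesimal CR automorphism of M_Q all of whose monomial terms have weight 1 is the zero field. -/
open Complex

noncomputable section

/-- Shorthand for `conj (z j)`. -/
def cc (z : Fin 3 → ℂ) (j : Fin 3) : ℂ := (starRingEnd ℂ) (z j)

/-- The polynomial
`Q(z,z̄) = (z₁²z₂z₃³ + z₁z₂⁴z₃)·z̄₁² + z₁²·(z̄₁²z̄₂z̄₃³ + z̄₁z̄₂⁴z̄₃) + z₁²z₂²z̄₁²z̄₂²`,
homogeneous of degree `8`. -/
def Qe4 (z : Fin 3 → ℂ) : ℂ :=
  ((z 0) ^ 2 * z 1 * (z 2) ^ 3 + z 0 * (z 1) ^ 4 * z 2) * (cc z 0) ^ 2 +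
    (z 0) ^ 2 * ((cc z 0) ^ 2 * cc z 1 * (cc z 2) ^ 3 + cc z 0 * (cc z 1) ^ 4 * cc z 2) +
    (z 0) ^ 2 * (z 1) ^ 2 * (cc z 0) ^ 2 * (cc z 1) ^ 2

/-- The holomorphic partial derivatives `∂Q/∂z_j` of `Qe4`. -/
def Qd4 : Fin 3 → (Fin 3 → ℂ) → ℂ :=
  ![fun z =>
      (2 * z 0 * z 1 * (z 2) ^ 3 + (z 1) ^ 4 * z 2) * (cc z 0) ^ 2 +
        2 * z 0 * ((cc z 0) ^ 2 * cc z 1 * (cc z 2) ^ 3 + cc z 0 * (cc z 1) ^ 4 * cc z 2) +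
        2 * z 0 * (z 1) ^ 2 * (cc z 0) ^ 2 * (cc z 1) ^ 2,
    fun z =>
      ((z 0) ^ 2 * (z 2) ^ 3 + 4 * z 0 * (z 1) ^ 3 * z 2) * (cc z 0) ^ 2 +
        2 * (z 0) ^ 2 * z 1 * (cc z 0) ^ 2 * (cc z 1) ^ 2,
    fun z =>
      (3 * (z 0) ^ 2 * z 1 * (z 2) ^ 2 + z 0 * (z 1) ^ 4) * (cc z 0) ^ 2]

/-- `Σ F_j ∂/∂z_j + G ∂/∂w` is an infinitesimal CR automorphism of `M_Q`,
for `Q` with evaluation function `Qe` and holomorphic derivatives `Qd`. -/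
def IsInfCRF (Qe : (Fin 3 → ℂ) → ℂ) (Qd : Fin 3 → (Fin 3 → ℂ) → ℂ)
    (F : Fin 3 → MvPolynomial (Fin 4) ℂ) (G : MvPolynomial (Fin 4) ℂ) : Prop :=
  ∀ (z : Fin 3 → ℂ) (u : ℝ),
    (MvPolynomial.eval (Fin.snoc z ((u : ℂ) + Complex.I * Qe z)) G / (2 * Complex.I) -
      ∑ j, MvPolynomial.eval (Fin.snoc z ((u : ℂ) + Complex.I * Qe z)) (F j) * Qd j z).re = 0

/-- The linear field `Σ_{j,k} A_{jk} z_k ∂/∂z_j` is a rotation of `M_Q`. -/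
def IsRotF (Qd : Fin 3 → (Fin 3 → ℂ) → ℂ) (A : Matrix (Fin 3) (Fin 3) ℂ) : Prop :=
  ∀ z : Fin 3 → ℂ, (∑ j, (∑ k, A j k * z k) * Qd j z).re = 0

/-- `A` is diagonalizable over `ℂ` with all eigenvalues purely imaginary. -/
def ImDiag (A : Matrix (Fin 3) (Fin 3) ℂ) : Prop :=
  ∃ (Pm : Matrix (Fin 3) (Fin 3) ℂ) (dv : Fin 3 → ℂ),
    IsUnit Pm ∧ A * Pm = Pm * Matrix.diagonal dv ∧ ∀ j, (dv j).re = 0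

/-- Weight of the monomial field `z^δ w^m ∂/∂z_j` (here `d = 8`). -/
def wZ (m : Fin 4 →₀ ℕ) : ℚ :=
  ((m 0 : ℚ) + (m 1 : ℚ) + (m 2 : ℚ)) / 8 + (m 3 : ℚ) - 1 / 8

/-- Weight of the monomial field `z^δ w^m ∂/∂w` (here `d = 8`). -/
def wW (m : Fin 4 →₀ ℕ) : ℚ :=
  ((m 0 : ℚ) + (m 1 : ℚ) + (m 2 : ℚ)) / 8 + (m 3 : ℚ) - 1

/-- The holomorphic factor `z₁²z₂z₃³ + z₁z₂⁴z₃`. -/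
def monP (z : Fin 3 → ℂ) : ℂ := (z 0) ^ 2 * z 1 * (z 2) ^ 3 + z 0 * (z 1) ^ 4 * z 2

/-- The derivative of `monP` at `z` in the direction `v`. -/
def dmonP (z v : Fin 3 → ℂ) : ℂ :=
  v 0 * (2 * z 0 * z 1 * (z 2) ^ 3 + (z 1) ^ 4 * z 2) +
    v 1 * ((z 0) ^ 2 * (z 2) ^ 3 + 4 * z 0 * (z 1) ^ 3 * z 2) +
    v 2 * (3 * (z 0) ^ 2 * z 1 * (z 2) ^ 2 + z 0 * (z 1) ^ 4)

/-- The holomorphic factor `z₁²z₂²`. -/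
def monN (z : Fin 3 → ℂ) : ℂ := (z 0) ^ 2 * (z 1) ^ 2

/-- The derivative of `monN` at `z` in the direction `v`. -/
def dmonN (z v : Fin 3 → ℂ) : ℂ := v 0 * (2 * z 0 * (z 1) ^ 2) + v 1 * (2 * (z 0) ^ 2 * z 1)

/-- The polarization of `Qe4`: `z̄` is replaced by an independent variable `ζ`. -/
def polQ (z ζ : Fin 3 → ℂ) : ℂ :=
  monP z * (ζ 0) ^ 2 + (z 0) ^ 2 * monP ζ + monN z * monN ζ

/-- The derivative of `polQ` in its first variable, in the direction `v`. -/
def dpolQ (z ζ v : Fin 3 → ℂ) : ℂ :=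
  dmonP z v * (ζ 0) ^ 2 + 2 * z 0 * v 0 * monP ζ + dmonN z v * monN ζ

lemma Qe4_eq_polQ (z : Fin 3 → ℂ) : Qe4 z = polQ z (cc z) := by
  simp only [Qe4, polQ, monP, monN]; ring

lemma sum_mul_Qd4 (z v : Fin 3 → ℂ) : ∑ j, v j * Qd4 j z = dpolQ z (cc z) v := by
  simp [Fin.sum_univ_three, Qd4, dpolQ, dmonP, monP, monN, dmonN]; ring

lemma conj_polQ (z ζ : Fin 3 → ℂ) :
    (starRingEnd ℂ) (polQ z ζ) = polQ (cc z) (cc ζ) := by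
  simp [polQ, monP, monN, cc]

lemma conj_dpolQ (z ζ v : Fin 3 → ℂ) :
    (starRingEnd ℂ) (dpolQ z ζ v) = dpolQ (cc z) (cc ζ) (cc v) := by
  simp [dpolQ, monP, monN, dmonP, dmonN, cc, Complex.conj_ofNat]

lemma dpolQ_add_smul (z ζ u v : Fin 3 → ℂ) (w : ℂ) :
    dpolQ z ζ (u + w • v) = dpolQ z ζ u + w * dpolQ z ζ v := by
  simp only [dpolQ, dmonP, dmonN, Pi.add_apply, Pi.smul_apply, smul_eq_mul]; ring

lemma cc_cc (z : Fin 3 → ℂ) : cc (cc z) = z := by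
  ext j; simp [cc]

lemma polQ_comm (z ζ : Fin 3 → ℂ) : polQ z ζ = polQ ζ z := by
  simp only [polQ]; ring

/-- The coefficients of an even polynomial function without constant term that vanishes
identically are zero. -/
lemma even_coeffs_eq_zero {a₁ a₂ a₃ a₄ a₅ a₆ a₇ : ℂ}
    (h : ∀ s : ℂ, a₁ * s ^ 2 + a₂ * s ^ 4 + a₃ * s ^ 6 + a₄ * s ^ 8 + a₅ * s ^ 10 +
      a₆ * s ^ 12 + a₇ * s ^ 14 = 0) :
    a₁ = 0 ∧ a₂ = 0 ∧ a₃ = 0 ∧ a₄ = 0 := by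
  open Polynomial in
  have hp : (C a₁ * X ^ 2 + C a₂ * X ^ 4 + C a₃ * X ^ 6 + C a₄ * X ^ 8 + C a₅ * X ^ 10 +
      C a₆ * X ^ 12 + C a₇ * X ^ 14 : Polynomial ℂ) = 0 :=
    Polynomial.funext fun s => by simpa using h s
  have hc := fun n => congrArg (fun p : Polynomial ℂ => p.coeff n) hp
  simp only [Polynomial.coeff_add, Polynomial.coeff_C_mul, Polynomial.coeff_X_pow,
    Polynomial.coeff_zero] at hc
  exact ⟨by simpa using hc 2, by simpa using hc 4, by simpa using hc 6, by simpa using hc 8⟩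

lemma eq_zero_of_dmon {z v : Fin 3 → ℂ} (h0 : z 0 ≠ 0) (h1 : z 1 ≠ 0)
    (h2 : 3 * z 0 * (z 2) ^ 2 + (z 1) ^ 3 ≠ 0) (hv : v 0 = 0) (hN : dmonN z v = 0)
    (hP : dmonP z v = 0) : v = 0 := by
  have hv1 : v 1 = 0 := by simpa [dmonN, hv, h0, h1] using hN
  have hv2 : v 2 * (z 0 * z 1 * (3 * z 0 * (z 2) ^ 2 + (z 1) ^ 3)) = 0 := by
    simp only [dmonP, hv, hv1] at hP
    linear_combination hP
  have hv2 : v 2 = 0 := by simpa [h0, h1, h2] using hv2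
  ext j
  fin_cases j <;> assumption

/-- The algebraic heart: the polarized tangency equation for a field of weight one forces the
quadratic coefficient `c` of `G` to vanish and the components to vanish at generic points. -/
lemma eq_zero_of_polarized {c : ℂ} {f l f' l' : (Fin 3 → ℂ) → Fin 3 → ℂ}
    (hf' : ∀ (s : ℂ) ζ, f' (s • ζ) = s ^ 9 • f' ζ) (hl' : ∀ (s : ℂ) ζ, l' (s • ζ) = s • l' ζ)
    (H : ∀ z ζ w, c * w ^ 2 - c * (w - 2 * I * polQ z ζ) ^ 2 =
      2 * I * (dpolQ z ζ (f z + w • l z) +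
        dpolQ ζ z (f' ζ + (w - 2 * I * polQ z ζ) • l' ζ))) :
    c = 0 ∧ ∀ z, z 0 ≠ 0 → z 1 ≠ 0 → 3 * z 0 * (z 2) ^ 2 + (z 1) ^ 3 ≠ 0 →
      f z = 0 ∧ l z = 0 := by
  have hI : I ^ 2 = -1 := I_sq
  simp only [dpolQ_add_smul] at H
  have hA (z ζ) : 2 * c * polQ z ζ - dpolQ z ζ (l z) - dpolQ ζ z (l' ζ) = 0 := by
    have h2 : (2 * I) ≠ 0 := by simp
    apply mul_left_cancel₀ h2
    linear_combination H z ζ 1 - H z ζ 0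
  have hB (z ζ) : 2 * c * polQ z ζ ^ 2 - I * dpolQ z ζ (f z) - I * dpolQ ζ z (f' ζ) -
      2 * polQ z ζ * dpolQ ζ z (l' ζ) = 0 := by
    linear_combination (1 / 2) * H z ζ 0 + (2 * c * polQ z ζ ^ 2
      - 2 * polQ z ζ * dpolQ ζ z (l' ζ)) * hI
  have hA' (z ζ) := even_coeffs_eq_zero
    (a₁ := 2 * c * monP z * ζ 0 ^ 2 - dmonP z (l z) * ζ 0 ^ 2 - 2 * ζ 0 * l' ζ 0 * monP z)
    (a₂ := 2 * c * monN z * monN ζ - dmonN z (l z) * monN ζ - dmonN ζ (l' ζ) * monN z)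
    (a₃ := 2 * c * z 0 ^ 2 * monP ζ - 2 * z 0 * l z 0 * monP ζ - dmonP ζ (l' ζ) * z 0 ^ 2)
    (a₄ := 0) (a₅ := 0) (a₆ := 0) (a₇ := 0) fun s => by
      have h := hA z (s • ζ)
      rw [hl'] at h
      simp only [polQ, dpolQ, dmonP, dmonN, monP, monN, Pi.smul_apply, smul_eq_mul] at h ⊢
      linear_combination h
  have hB' (z ζ) := even_coeffs_eq_zero
    (a₁ := -I * dmonP z (f z) * ζ 0 ^ 2)
    (a₂ := 2 * c * monP z ^ 2 * ζ 0 ^ 4 - I * dmonN z (f z) * monN ζ -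
      2 * monP z * ζ 0 ^ 2 * (2 * ζ 0 * l' ζ 0 * monP z))
    (a₃ := 4 * c * monP z * ζ 0 ^ 2 * (monN z * monN ζ) - I * (2 * z 0 * f z 0 * monP ζ) -
      2 * (monP z * ζ 0 ^ 2 * (monN z * dmonN ζ (l' ζ)) +
        monN z * monN ζ * (2 * ζ 0 * l' ζ 0 * monP z)))
    (a₄ := 2 * c * (monN z ^ 2 * monN ζ ^ 2 + 2 * monP z * ζ 0 ^ 2 * z 0 ^ 2 * monP ζ) -
      2 * (monP z * ζ 0 ^ 2 * (z 0 ^ 2 * dmonP ζ (l' ζ)) +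
        monN z * monN ζ * (monN z * dmonN ζ (l' ζ)) +
        z 0 ^ 2 * monP ζ * (2 * ζ 0 * l' ζ 0 * monP z)))
    (a₅ := 4 * c * (monN z * monN ζ) * (z 0 ^ 2 * monP ζ) - I * (2 * ζ 0 * f' ζ 0 * monP z) -
      2 * (monN z * monN ζ * (z 0 ^ 2 * dmonP ζ (l' ζ)) +
        z 0 ^ 2 * monP ζ * (monN z * dmonN ζ (l' ζ))))
    (a₆ := 2 * c * (z 0 ^ 2 * monP ζ) ^ 2 - I * (monN z * dmonN ζ (f' ζ)) -
      2 * (z 0 ^ 2 * monP ζ) * (z 0 ^ 2 * dmonP ζ (l' ζ)))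
    (a₇ := -I * (z 0 ^ 2 * dmonP ζ (f' ζ))) fun s => by
      have h := hB z (s • ζ)
      rw [hl', hf'] at h
      simp only [polQ, dpolQ, dmonP, dmonN, monP, monN, Pi.smul_apply, smul_eq_mul] at h ⊢
      linear_combination h
  let e : Fin 3 → ℂ := ![1, 1, 1]
  have h01 : e 0 = 1 := rfl
  have hN1 : monN e = 1 := by simp [monN, e]
  have hP2 : monP e = 2 := by simp [monP, e]; norm_num
  obtain ⟨κ, hκ⟩ : ∃ κ, ∀ ζ : Fin 3 → ℂ, ζ 0 ≠ 0 → l' ζ 0 = κ * ζ 0 := by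
    refine ⟨(4 * c - dmonP e (l e)) / 4, fun ζ h0 => mul_left_cancel₀ h0 ?_⟩
    have h := (hA' e ζ).1
    rw [hP2] at h
    linear_combination (-1 / 4) * h
  obtain ⟨μ, hμ⟩ : ∃ μ, ∀ ζ : Fin 3 → ℂ, ζ 0 ≠ 0 → ζ 1 ≠ 0 → l' ζ 1 = μ * ζ 1 := by
    refine ⟨(2 * c - dmonN e (l e) - 2 * κ) / 2, fun ζ h0 h1 => ?_⟩
    have h := (hA' e ζ).2.1
    rw [hN1] at h
    apply mul_left_cancel₀ (mul_ne_zero (pow_ne_zero 2 h0) h1)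
    simp only [monN, dmonN.eq_1 ζ, hκ ζ h0] at h
    linear_combination (-1 / 2) * h
  have hc : c = 2 * κ := by
    have h := (hB' e ![1, 0, 0]).2.1
    rw [hκ _ (by simp)] at h
    simp [monP, monN, e] at h
    linear_combination (1 / 8) * h
  have hμ0 : μ = 0 := by
    have h := (hB' e ![1, 1, 0]).2.2.1
    rw [dmonN, hκ _ (by simp), hμ _ (by simp) (by simp)] at h
    simp [monP, monN, e] at h
    linear_combination (-1 / 8) * h + hc
  have hκ0 : κ = 0 := by
    have h := (hB' e ![-1 / 3, 1, 1]).2.2.2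
    rw [dmonN, dmonP, hκ _ (by simp), hμ _ (by simp) (by simp), hμ0, hc] at h
    simp [monP, monN, e] at h
    linear_combination (-81 / 12) * h
  have hc0 : c = 0 := by simp [hc, hκ0]
  have he0 : l' e 0 = 0 := by simp [hκ e (by simp [e]), hκ0]
  have he1 : l' e 1 = 0 := by simp [hμ e (by simp [e]) (by simp [e]), hμ0]
  have heN : dmonN e (l' e) = 0 := by simp [dmonN, he0, he1]
  have heP : dmonP e (l' e) = 0 := by
    have h := (hB' e e).2.2.2
    simpa [hc0, heN, he0, monP, e] using h
  refine ⟨hc0, fun z h0 h1 h2 => ⟨?_, ?_⟩⟩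
  · refine eq_zero_of_dmon h0 h1 h2 ?_ ?_ ?_
    · simpa [hc0, heN, he0, hP2, h0] using (hB' z e).2.2.1
    · simpa [hc0, he0, hN1] using (hB' z e).2.1
    · simpa [h01] using (hB' z e).1
  · refine eq_zero_of_dmon h0 h1 h2 ?_ ?_ ?_
    · simpa [hc0, heP, hP2, h0] using (hA' z e).2.2.1
    · simpa [hc0, heN, hN1] using (hA' z e).2.1
    · simpa [hc0, he0, h01] using (hA' z e).1

/-- A holomorphic function of `(z, ζ, w)` vanishing whenever `ζ = z̄` and `w` is real
vanishes identically. -/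
lemma eq_zero_of_conj_real {φ : (Fin 3 → ℂ) → (Fin 3 → ℂ) → ℂ → ℂ}
    (hφ : Differentiable ℂ fun p : (Fin 3 → ℂ) × (Fin 3 → ℂ) × ℂ => φ p.1 p.2.1 p.2.2)
    (h : ∀ z (u : ℝ), φ z (cc z) u = 0) (z ζ : Fin 3 → ℂ) (w : ℂ) : φ z ζ w = 0 := by
  set a : Fin 3 → ℂ := (1 / 2 : ℂ) • (z + cc ζ) with ha
  set b : Fin 3 → ℂ := (-I / 2) • (z - cc ζ) with hb
  let ψ : ℂ → ℂ := fun t => φ (a + t • b) (cc a + t • cc b) (w.re + t * w.im)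
  have hψ : Differentiable ℂ ψ := hφ.comp
    (g := fun p : (Fin 3 → ℂ) × (Fin 3 → ℂ) × ℂ => φ p.1 p.2.1 p.2.2)
    (f := fun t : ℂ => (a + t • b, cc a + t • cc b, (w.re + t * w.im : ℂ))) (by fun_prop)
  have hreal (t : ℝ) : ψ t = 0 := by
    have hcc : cc a + (t : ℂ) • cc b = cc (a + (t : ℂ) • b) := by
      ext j; simp [cc]
    simp only [ψ, hcc]
    exact_mod_cast h (a + (t : ℂ) • b) (w.re + t * w.im)
  have hlim : Filter.Tendsto ((↑) : ℝ → ℂ) (nhdsWithin 0 {0}ᶜ) (nhdsWithin 0 {0}ᶜ) := by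
    refine tendsto_nhdsWithin_iff.2 ⟨?_, ?_⟩
    · simpa using (continuous_ofReal.tendsto (0 : ℝ)).mono_left nhdsWithin_le_nhds
    · filter_upwards [self_mem_nhdsWithin] with t ht using by simpa using ht
  have hzero : ψ = fun _ => 0 := by
    refine AnalyticOnNhd.eq_of_frequently_eq (z₀ := 0)
      (fun t _ => hψ.analyticAt t) (fun t _ => analyticAt_const) ?_
    exact hlim.frequently (Filter.Eventually.frequently (Filter.Eventually.of_forall hreal))
  have hz : a + I • b = z := by
    ext j
    simp only [ha, hb, Pi.add_apply, Pi.sub_apply, Pi.smul_apply, smul_eq_mul]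
    linear_combination (-(z j - cc ζ j) / 2) * I_sq
  have hζ : cc a + I • cc b = ζ := by
    ext j
    simp [ha, hb, cc, Complex.conj_ofNat]
    linear_combination (((starRingEnd ℂ) (z j) - ζ j) / 2) * I_sq
  have hw : (w.re + I * w.im : ℂ) = w := by rw [mul_comm]; exact re_add_im w
  simpa [ψ, hz, hζ, hw] using congrFun hzero I

lemma eval_snoc (p : MvPolynomial (Fin 4) ℂ) (z : Fin 3 → ℂ) (w : ℂ) :
    MvPolynomial.eval (Fin.snoc z w) p =
      ∑ m ∈ p.support, p.coeff m * (z 0 ^ m 0 * z 1 ^ m 1 * z 2 ^ m 2 * w ^ m 3) := by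
  rw [MvPolynomial.eval_eq']
  refine Finset.sum_congr rfl fun m _ => ?_
  rw [Fin.prod_univ_four]
  rfl

lemma differentiable_eval_snoc {E : Type*} [NormedAddCommGroup E] [NormedSpace ℂ E]
    (p : MvPolynomial (Fin 4) ℂ) {g : E → Fin 3 → ℂ} {h : E → ℂ}
    (hg : Differentiable ℂ g) (hh : Differentiable ℂ h) :
    Differentiable ℂ fun x => MvPolynomial.eval (Fin.snoc (g x) (h x)) p := by
  simp only [eval_snoc]
  fun_prop

lemma differentiable_dpolQ {E : Type*} [NormedAddCommGroup E] [NormedSpace ℂ E]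
    {g h v : E → Fin 3 → ℂ} (hg : Differentiable ℂ g) (hh : Differentiable ℂ h)
    (hv : Differentiable ℂ v) : Differentiable ℂ fun x => dpolQ (g x) (h x) (v x) := by
  simp only [dpolQ, dmonP, dmonN, monP, monN]
  fun_prop

lemma conj_eval_snoc (p : MvPolynomial (Fin 4) ℂ) (z : Fin 3 → ℂ) (w : ℂ) :
    (starRingEnd ℂ) (MvPolynomial.eval (Fin.snoc z w) p) =
      MvPolynomial.eval (Fin.snoc (cc z) ((starRingEnd ℂ) w))
        (MvPolynomial.map (starRingEnd ℂ) p) := by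
  rw [MvPolynomial.eval_map, MvPolynomial.eval, MvPolynomial.coe_eval₂Hom,
    MvPolynomial.eval₂_comp_left, RingHom.comp_id]
  congr 1
  ext i
  fin_cases i <;> rfl

/-- A component `F_j` of weight one is affine in `w`, with coefficients homogeneous of degrees
`9` and `1`. -/
lemma exists_affine_of_wZ {p : MvPolynomial (Fin 4) ℂ} (hp : ∀ m ∈ p.support, wZ m = 1) :
    ∃ f l : (Fin 3 → ℂ) → ℂ,
      (∀ z w, MvPolynomial.eval (Fin.snoc z w) p = f z + w * l z) ∧
      (∀ (s : ℂ) z, f (s • z) = s ^ 9 * f z) ∧ ∀ (s : ℂ) z, l (s • z) = s * l z := by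
  have hm (m) (h : m ∈ p.support) :
      m 3 = 0 ∧ m 0 + m 1 + m 2 = 9 ∨ m 3 = 1 ∧ m 0 + m 1 + m 2 = 1 := by
    have h1 := hp m h
    have h2 : m 0 + m 1 + m 2 + 8 * m 3 = 9 := by
      have : (m 0 + m 1 + m 2 + 8 * m 3 : ℚ) = 9 := by
        simp only [wZ] at h1; linarith
      exact_mod_cast this
    omega
  let mon : (Fin 4 →₀ ℕ) → (Fin 3 → ℂ) → ℂ :=
    fun m z => p.coeff m * (z 0 ^ m 0 * z 1 ^ m 1 * z 2 ^ m 2)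
  have hmon (m) (s : ℂ) (z) : mon m (s • z) = s ^ (m 0 + m 1 + m 2) * mon m z := by
    simp only [mon, Pi.smul_apply, smul_eq_mul]; ring
  refine ⟨fun z => ∑ m ∈ p.support, if m 3 = 0 then mon m z else 0,
    fun z => ∑ m ∈ p.support, if m 3 = 1 then mon m z else 0, fun z w => ?_, fun s z => ?_,
    fun s z => ?_⟩
  · rw [eval_snoc, Finset.mul_sum, ← Finset.sum_add_distrib]
    refine Finset.sum_congr rfl fun m h => ?_
    rcases hm m h with ⟨h3, -⟩ | ⟨h3, -⟩ <;> simp [h3, mon]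
    ring
  · rw [Finset.mul_sum]
    refine Finset.sum_congr rfl fun m h => ?_
    rcases hm m h with ⟨h3, hs⟩ | ⟨h3, hs⟩ <;> simp [h3, hmon, hs]
  · rw [Finset.mul_sum]
    refine Finset.sum_congr rfl fun m h => ?_
    rcases hm m h with ⟨h3, hs⟩ | ⟨h3, hs⟩ <;> simp [h3, hmon, hs]

/-- A component `G` of weight one restricts to a multiple of `w²` on `z = 0`. -/
lemma exists_sq_of_wW {p : MvPolynomial (Fin 4) ℂ} (hp : ∀ m ∈ p.support, wW m = 1) :
    ∃ c : ℂ, ∀ w, MvPolynomial.eval (Fin.snoc (0 : Fin 3 → ℂ) w) p = c * w ^ 2 := by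
  refine ⟨∑ m ∈ p.support, p.coeff m * (0 ^ m 0 * 0 ^ m 1 * 0 ^ m 2), fun w => ?_⟩
  rw [eval_snoc, Finset.sum_mul]
  refine Finset.sum_congr rfl fun m h => ?_
  have h1 := hp m h
  have h2 : m 0 + m 1 + m 2 + 8 * m 3 = 16 := by
    have : (m 0 + m 1 + m 2 + 8 * m 3 : ℚ) = 16 := by
      simp only [wW] at h1; linarith
    exact_mod_cast this
  by_cases h0 : m 0 = 0 ∧ m 1 = 0 ∧ m 2 = 0
  · have h3 : m 3 = 2 := by omega
    simp [h0, h3]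
  · have : m 0 ≠ 0 ∨ m 1 ≠ 0 ∨ m 2 ≠ 0 := by tauto
    rcases this with h | h | h <;> simp [h]

/-- The tangency equation extends to independent variables `z`, `ζ = z̄` and `w`. -/
lemma IsInfCRF.polarized {F : Fin 3 → MvPolynomial (Fin 4) ℂ} {G : MvPolynomial (Fin 4) ℂ}
    (h : IsInfCRF Qe4 Qd4 F G) (z ζ : Fin 3 → ℂ) (w : ℂ) :
    MvPolynomial.eval (Fin.snoc z w) G -
        MvPolynomial.eval (Fin.snoc ζ (w - 2 * I * polQ z ζ))
          (MvPolynomial.map (starRingEnd ℂ) G) =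
      2 * I * (dpolQ z ζ (fun j => MvPolynomial.eval (Fin.snoc z w) (F j)) +
        dpolQ ζ z fun j => MvPolynomial.eval (Fin.snoc ζ (w - 2 * I * polQ z ζ))
          (MvPolynomial.map (starRingEnd ℂ) (F j))) := by
  let φ : (Fin 3 → ℂ) → (Fin 3 → ℂ) → ℂ → ℂ := fun z ζ u =>
    MvPolynomial.eval (Fin.snoc z (u + I * polQ z ζ)) G -
        MvPolynomial.eval (Fin.snoc ζ (u - I * polQ z ζ)) (MvPolynomial.map (starRingEnd ℂ) G) -
      2 * I * (dpolQ z ζ (fun j => MvPolynomial.eval (Fin.snoc z (u + I * polQ z ζ)) (F j)) +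
        dpolQ ζ z fun j => MvPolynomial.eval (Fin.snoc ζ (u - I * polQ z ζ))
          (MvPolynomial.map (starRingEnd ℂ) (F j)))
  have hQ : Differentiable ℂ fun p : (Fin 3 → ℂ) × (Fin 3 → ℂ) × ℂ => polQ p.1 p.2.1 := by
    unfold polQ monP monN
    fun_prop
  have hpos (p : MvPolynomial (Fin 4) ℂ) :
      Differentiable ℂ fun x : (Fin 3 → ℂ) × (Fin 3 → ℂ) × ℂ =>
        MvPolynomial.eval (Fin.snoc x.1 (x.2.2 + I * polQ x.1 x.2.1)) p :=
    differentiable_eval_snoc p (by fun_prop) (by fun_prop)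
  have hneg (p : MvPolynomial (Fin 4) ℂ) :
      Differentiable ℂ fun x : (Fin 3 → ℂ) × (Fin 3 → ℂ) × ℂ =>
        MvPolynomial.eval (Fin.snoc x.2.1 (x.2.2 - I * polQ x.1 x.2.1)) p :=
    differentiable_eval_snoc p (by fun_prop) (by fun_prop)
  have hφ : Differentiable ℂ fun p : (Fin 3 → ℂ) × (Fin 3 → ℂ) × ℂ => φ p.1 p.2.1 p.2.2 := by
    have h1 := differentiable_dpolQ (E := (Fin 3 → ℂ) × (Fin 3 → ℂ) × ℂ)
      (g := fun x => x.1) (h := fun x => x.2.1) (by fun_prop) (by fun_prop)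
      (differentiable_pi.2 fun j => hpos (F j))
    have h2 := differentiable_dpolQ (E := (Fin 3 → ℂ) × (Fin 3 → ℂ) × ℂ)
      (g := fun x => x.2.1) (h := fun x => x.1) (by fun_prop) (by fun_prop)
      (differentiable_pi.2 fun j => hneg (MvPolynomial.map (starRingEnd ℂ) (F j)))
    exact ((hpos G).sub (hneg _)).sub ((h1.add h2).const_mul (2 * I))
  have hreal (z : Fin 3 → ℂ) (u : ℝ) : φ z (cc z) u = 0 := by
    have hz := h z u
    rw [sum_mul_Qd4 z fun j => MvPolynomial.eval (Fin.snoc z (u + I * Qe4 z)) (F j),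
      Qe4_eq_polQ] at hz
    have hQc : (starRingEnd ℂ) (polQ z (cc z)) = polQ z (cc z) := by
      rw [conj_polQ, cc_cc, polQ_comm]
    have hwc : (starRingEnd ℂ) (u + I * polQ z (cc z)) = u - I * polQ z (cc z) := by
      simp [hQc, sub_eq_add_neg]
    have hadd := add_conj (MvPolynomial.eval (Fin.snoc z (u + I * polQ z (cc z))) G / (2 * I) -
      dpolQ z (cc z) fun j => MvPolynomial.eval (Fin.snoc z (u + I * polQ z (cc z))) (F j))
    rw [hz, mul_zero, ofReal_zero, map_sub, map_div₀, conj_dpolQ, conj_eval_snoc, hwc, cc_cc] at hadd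
    have hFc : (cc fun j => MvPolynomial.eval (Fin.snoc z (u + I * polQ z (cc z))) (F j)) =
        fun j => MvPolynomial.eval (Fin.snoc (cc z) (u - I * polQ z (cc z)))
          (MvPolynomial.map (starRingEnd ℂ) (F j)) := by
      ext j
      rw [← hwc, ← conj_eval_snoc]
      rfl
    rw [hFc] at hadd
    simp only [map_mul, conj_I, Complex.conj_ofNat] at hadd
    have hI : I ≠ 0 := I_ne_zero
    simp only [φ]
    field_simp at hadd
    linear_combination hadd
  have hzero := eq_zero_of_conj_real hφ hreal z ζ (w - I * polQ z ζ)
  have h1 : w - I * polQ z ζ + I * polQ z ζ = w := by ring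
  have h2 : w - I * polQ z ζ - I * polQ z ζ = w - 2 * I * polQ z ζ := by ring
  simp only [φ, h1, h2] at hzero
  exact sub_eq_zero.1 hzero

/-- A polynomial in `(z, w)` vanishing at generic `z` is zero. -/
lemma eq_zero_of_eval_generic {p : MvPolynomial (Fin 4) ℂ}
    (h : ∀ z : Fin 3 → ℂ, z 0 ≠ 0 → z 1 ≠ 0 → 3 * z 0 * (z 2) ^ 2 + (z 1) ^ 3 ≠ 0 →
      ∀ w, MvPolynomial.eval (Fin.snoc z w) p = 0) : p = 0 := by
  open MvPolynomial in
  let q : MvPolynomial (Fin 4) ℂ := X 0 * X 1 * (3 * X 0 * X 2 ^ 2 + X 1 ^ 3)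
  have hq : q ≠ 0 := fun h0 => by
    have := congrArg (MvPolynomial.eval fun _ => (1 : ℂ)) h0
    norm_num [q] at this
  refine (mul_eq_zero.1 (MvPolynomial.funext fun x => ?_ : p * q = 0)).resolve_right hq
  by_cases hx : MvPolynomial.eval x q = 0
  · simp [hx]
  · have hx' : x 0 * x 1 * (3 * x 0 * x 2 ^ 2 + x 1 ^ 3) ≠ 0 := by simpa [q] using hx
    simp only [mul_ne_zero_iff] at hx'
    have := h (fun i => x i.castSucc) hx'.1.1 hx'.1.2 hx'.2 (x (Fin.last 3))
    have hsnoc : (Fin.snoc (fun i => x i.castSucc) (x (Fin.last 3)) : Fin 4 → ℂ) = x := by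
      ext i; fin_cases i <;> rfl
    rw [hsnoc] at this
    simp [this]

/-- The diagonal field with entries `11i, 3i, -i` is a rotation. -/
lemma isRotF_diagonal :
    IsRotF Qd4 (Matrix.diagonal ![11 * Complex.I, 3 * Complex.I, -Complex.I]) := by
  intro z
  have hv (j : Fin 3) : ∑ k, Matrix.diagonal ![11 * Complex.I, 3 * Complex.I, -Complex.I] j k *
      z k = (![11 * I * z 0, 3 * I * z 1, -I * z 2] : Fin 3 → ℂ) j := by
    fin_cases j <;> simp [Matrix.diagonal]
  simp only [hv, sum_mul_Qd4]
  set v : Fin 3 → ℂ := ![11 * I * z 0, 3 * I * z 1, -I * z 2]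
  have h : dpolQ z (cc z) v + (starRingEnd ℂ) (dpolQ z (cc z) v) = 0 := by
    rw [conj_dpolQ, cc_cc]
    have h0 : cc v 0 = -11 * I * cc z 0 := by simp [v, cc, Complex.conj_ofNat]
    have h1 : cc v 1 = -3 * I * cc z 1 := by simp [v, cc, Complex.conj_ofNat]
    have h2 : cc v 2 = I * cc z 2 := by simp [v, cc]
    simp only [dpolQ, dmonP, dmonN, monP, monN, h0, h1, h2]
    simp [v]
    ring
  rw [add_conj] at h
  have := congrArg re h
  simpa using this

/-- The polynomial `Qe4` admits no infinitesimal CR automorphism of weight one. -/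
lemma eq_zero_of_weight_one {F : Fin 3 → MvPolynomial (Fin 4) ℂ} {G : MvPolynomial (Fin 4) ℂ}
    (h : IsInfCRF Qe4 Qd4 F G) (hF : ∀ j, ∀ m ∈ (F j).support, wZ m = 1)
    (hG : ∀ m ∈ G.support, wW m = 1) : (∀ j, F j = 0) ∧ G = 0 := by
  have hsupp (p : MvPolynomial (Fin 4) ℂ) := MvPolynomial.support_map_subset (starRingEnd ℂ) p
  choose f l hFe _ _ using fun j => exists_affine_of_wZ (hF j)
  choose f' l' hFe' hf' hl' using fun j =>
    exists_affine_of_wZ fun m hm => hF j m (hsupp _ hm)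
  obtain ⟨c, hc⟩ := exists_sq_of_wW fun m hm => hG m (hsupp _ hm)
  have hGz (z) (w) : MvPolynomial.eval (Fin.snoc z w) G = c * w ^ 2 := by
    have h0 := h.polarized z 0 w
    simpa [polQ, dpolQ, dmonP, dmonN, monP, monN, hc, sub_eq_zero] using h0
  have hGζ (ζ) (w) : MvPolynomial.eval (Fin.snoc ζ w) (MvPolynomial.map (starRingEnd ℂ) G) =
      c * w ^ 2 := by
    have h0 := h.polarized 0 ζ w
    simp only [hGz] at h0
    simp [polQ, dpolQ, dmonP, dmonN, monP, monN] at h0 ⊢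
    linear_combination -h0
  obtain ⟨hc0, hgen⟩ := eq_zero_of_polarized (c := c) (f := fun z j => f j z)
    (l := fun z j => l j z) (f' := fun z j => f' j z) (l' := fun z j => l' j z)
    (fun s ζ => by ext j; simp [hf']) (fun s ζ => by ext j; simp [hl'])
    (fun z ζ w => by
      have h0 := h.polarized z ζ w
      simp only [hGz, hGζ, hFe, hFe'] at h0
      exact h0)
  refine ⟨fun j => eq_zero_of_eval_generic fun z h0 h1 h2 w => ?_,
    eq_zero_of_eval_generic fun z _ _ _ w => by simp [hGz, hc0]⟩
  obtain ⟨hf0, hl0⟩ := hgen z h0 h1 h2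
  rw [hFe, show f j z = 0 from congrFun hf0 j, show l j z = 0 from congrFun hl0 j]
  simp

/-- For the hypersurface `Im w = Qe4(z,z̄)` in `ℂ⁴`:
(1) `X = 11i z₁∂_{z₁} + 3i z₂∂_{z₂} - i z₃∂_{z₃}` is a (nonzero imaginary diagonal)
rotation, and (2) `g₁ = {0}`. -/
theorem stmt4 :
    (IsRotF Qd4 (Matrix.diagonal ![11 * Complex.I, 3 * Complex.I, -Complex.I]) ∧
      Matrix.diagonal ![11 * Complex.I, 3 * Complex.I, -Complex.I] ≠ 0 ∧
      ImDiag (Matrix.diagonal ![11 * Complex.I, 3 * Complex.I, -Complex.I])) ∧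
    (∀ (F : Fin 3 → MvPolynomial (Fin 4) ℂ) (G : MvPolynomial (Fin 4) ℂ),
      IsInfCRF Qe4 Qd4 F G →
      (∀ j, ∀ m ∈ (F j).support, wZ m = 1) →
      (∀ m ∈ G.support, wW m = 1) →
      (∀ j, F j = 0) ∧ G = 0) := by
  refine ⟨⟨isRotF_diagonal, fun h => ?_, 1, _, isUnit_one, by rw [mul_one, one_mul], fun j => ?_⟩,
    fun F G h hF hG => eq_zero_of_weight_one h hF hG⟩
  · have := congrFun (congrFun h 0) 0
    simp at this
  · fin_cases j <;> simp
end
end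

section
/- Let P, Q, R ∈ ℂ[z₁,z₂,z₃] be homogeneous polynomials with deg P + deg Q = 2·deg R, let Φ(z) = P(z)·conj(Q(z)) + Q(z)·conj(P(z)) + R(z)·conj(R(z)) and M = {(z,w) ∈ ℂ³×ℂ : Im w = Φ(z)}. Then M is holomorphically nondegenerate if and only if the Jacobian determinant J(P,Q,R), i.e. the determinant of the 3×3 matrix with entries ∂P/∂z_i, ∂Q/∂z_i, ∂R/∂z_i (i = 1,2,3), is not the zero polynomial. -/
open MvPolynomial Complex

noncomputable section

/-- `Φ(z) = P(z)·conj(Q(z)) + Q(z)·conj(P(z)) + R(z)·conj(R(z))`, so that the model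
hypersurface is `M = {(z,w) : Im w = Φ(z)}`. -/
def Phi (P Q R : MvPolynomial (Fin 3) ℂ) (z : Fin 3 → ℂ) : ℂ :=
  eval z P * (starRingEnd ℂ) (eval z Q) + eval z Q * (starRingEnd ℂ) (eval z P) +
    eval z R * (starRingEnd ℂ) (eval z R)

/-- `Φ_j(z) = (∂P/∂z_j)(z)·conj(Q(z)) + (∂Q/∂z_j)(z)·conj(P(z)) + (∂R/∂z_j)(z)·conj(R(z))`. -/
def PhiD (P Q R : MvPolynomial (Fin 3) ℂ) (j : Fin 3) (z : Fin 3 → ℂ) : ℂ :=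
  eval z (pderiv j P) * (starRingEnd ℂ) (eval z Q) +
    eval z (pderiv j Q) * (starRingEnd ℂ) (eval z P) +
    eval z (pderiv j R) * (starRingEnd ℂ) (eval z R)

/-- The polynomial vector field `Σ F_j(z,w) ∂/∂z_j + G(z,w) ∂/∂w` (variables
`0,1,2` are `z₁,z₂,z₃` and variable `3` is `w`) is holomorphic tangent to `M`. -/
def HoloTangent (P Q R : MvPolynomial (Fin 3) ℂ)
    (F : Fin 3 → MvPolynomial (Fin 4) ℂ) (G : MvPolynomial (Fin 4) ℂ) : Prop :=
  ∀ (z : Fin 3 → ℂ) (u : ℝ),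
    eval (Fin.snoc z ((u : ℂ) + Complex.I * Phi P Q R z)) G / (2 * Complex.I) -
      ∑ j, eval (Fin.snoc z ((u : ℂ) + Complex.I * Phi P Q R z)) (F j) * PhiD P Q R j z = 0

/-- `M` is holomorphically nondegenerate. -/
def HoloNondeg (P Q R : MvPolynomial (Fin 3) ℂ) : Prop :=
  ∀ (F : Fin 3 → MvPolynomial (Fin 4) ℂ) (G : MvPolynomial (Fin 4) ℂ),
    HoloTangent P Q R F G → (∀ j, F j = 0) ∧ G = 0

/-- A finite sum `∑ aₖ(z) conj(bₖ(z))` vanishing identically in `z` also vanishes when `z` and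
`conj z` are replaced by independent variables. -/
theorem sum_eval_mul_conj_eval_eq_zero {σ ι : Type*} (s : Finset ι)
    (a b : ι → MvPolynomial σ ℂ)
    (h : ∀ z : σ → ℂ, ∑ k ∈ s, eval z (a k) * (starRingEnd ℂ) (eval z (b k)) = 0)
    (z ζ : σ → ℂ) :
    ∑ k ∈ s, eval z (a k) * (starRingEnd ℂ) (eval ζ (b k)) = 0 := by
  have hconj (v : σ → ℂ) (f : MvPolynomial σ ℂ) :
      eval v (map (starRingEnd ℂ) f) =
        (starRingEnd ℂ) (eval (fun i => (starRingEnd ℂ) (v i)) f) := by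
    induction f using MvPolynomial.induction_on with
    | C c => simp
    | add f g hf hg => simp [hf, hg]
    | mul_X f i hf => simp [hf]
  have hbind (v : σ ⊕ σ → ℂ) (g : σ → MvPolynomial (σ ⊕ σ) ℂ) (f : MvPolynomial σ ℂ) :
      eval v (bind₁ g f) = eval (fun i => eval v (g i)) f := eval₂Hom_bind₁ _ _ _ _
  let H : MvPolynomial (σ ⊕ σ) ℂ := ∑ k ∈ s,
    bind₁ (fun i => X (Sum.inl i) + C I * X (Sum.inr i)) (a k) *
      bind₁ (fun i => X (Sum.inl i) - C I * X (Sum.inr i)) (map (starRingEnd ℂ) (b k))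
  have hH (v : σ ⊕ σ → ℂ) : eval v H = ∑ k ∈ s,
      eval (fun i => v (Sum.inl i) + I * v (Sum.inr i)) (a k) * (starRingEnd ℂ)
        (eval (fun i => (starRingEnd ℂ) (v (Sum.inl i) - I * v (Sum.inr i))) (b k)) := by
    simp only [H, map_sum, map_mul]
    refine Finset.sum_congr rfl fun k _ => ?_
    rw [← hconj, hbind, hbind]
    simp
  have hzero : H = 0 := by
    refine MvPolynomial.funext_set (fun _ => Set.range ((↑) : ℝ → ℂ))
      (fun _ => Set.infinite_range_of_injective Complex.ofReal_injective) fun v hv => ?_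
    rw [hH, map_zero, ← h (fun i => v (Sum.inl i) + I * v (Sum.inr i))]
    have hreal (j : σ ⊕ σ) : (starRingEnd ℂ) (v j) = v j := by
      obtain ⟨x, hx⟩ := hv j (Set.mem_univ j)
      rw [← hx, Complex.conj_ofReal]
    simp [hreal]
  have hspec := hH (Sum.elim (fun i => (z i + (starRingEnd ℂ) (ζ i)) / 2)
    (fun i => (z i - (starRingEnd ℂ) (ζ i)) / (2 * I)))
  rw [hzero, map_zero] at hspec
  have hI : I ≠ 0 := I_ne_zero
  have hz : (fun i => (z i + (starRingEnd ℂ) (ζ i)) / 2 +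
      I * ((z i - (starRingEnd ℂ) (ζ i)) / (2 * I))) = z := by
    funext i
    field_simp
    ring
  have hζ : (fun i => (starRingEnd ℂ) ((z i + (starRingEnd ℂ) (ζ i)) / 2 -
      I * ((z i - (starRingEnd ℂ) (ζ i)) / (2 * I)))) = ζ := by
    funext i
    rw [← Complex.conj_conj (ζ i)]
    congr 1
    rw [Complex.conj_conj]
    field_simp
    ring
  simp only [Sum.elim_inl, Sum.elim_inr] at hspec
  rw [hz, hζ] at hspec
  exact hspec.symm

/-- If the Jacobian determinant of `f` is nonzero, then `1` and the `f j` are linearly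
independent. -/
theorem eq_zero_of_sum_C_mul_add_C_eq_zero {n : Type*} [Fintype n] [DecidableEq n]
    (f : n → MvPolynomial n ℂ) (hJ : (Matrix.of fun i j => pderiv i (f j)).det ≠ 0)
    (c : n → ℂ) (d : ℂ) (h : ∑ j, C (c j) * f j + C d = 0) : c = 0 ∧ d = 0 := by
  have hc : (fun j => C (c j) : n → MvPolynomial n ℂ) = 0 := by
    refine Matrix.eq_zero_of_mulVec_eq_zero hJ (funext fun i => ?_)
    have hi := congrArg (pderiv i) h
    simpa [Matrix.mulVec, dotProduct, Derivation.leibniz, mul_comm] using hi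
  have hc' : c = 0 := funext fun j => by simpa using congrFun hc j
  subst hc'
  exact ⟨rfl, by simpa using h⟩

/-- The tangency identity, known on real translates of `iΦ(z)`, holds for all complex `w`. -/
theorem HoloTangent.eval_snoc {P Q R : MvPolynomial (Fin 3) ℂ}
    {F : Fin 3 → MvPolynomial (Fin 4) ℂ} {G : MvPolynomial (Fin 4) ℂ}
    (h : HoloTangent P Q R F G) (z : Fin 3 → ℂ) (w : ℂ) :
    eval (Fin.snoc z w : Fin 4 → ℂ) G / (2 * I) -
      ∑ j, eval (Fin.snoc z w : Fin 4 → ℂ) (F j) * PhiD P Q R j z = 0 := by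
  let slice (f : MvPolynomial (Fin 4) ℂ) : Polynomial ℂ :=
    aeval (Fin.snoc (fun i => Polynomial.C (z i))
      (Polynomial.X + Polynomial.C (I * Phi P Q R z)) : Fin 4 → Polynomial ℂ) f
  have hslice (f : MvPolynomial (Fin 4) ℂ) (t : ℂ) :
      (slice f).eval t = eval (Fin.snoc z (t + I * Phi P Q R z) : Fin 4 → ℂ) f := by
    induction f using MvPolynomial.induction_on with
    | C c => simp [slice]
    | add f g hf hg => simp_all [slice]
    | mul_X f i hf =>
      simp only [slice, map_mul, Polynomial.eval_mul] at hf ⊢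
      rw [hf]
      congr 1
      rw [aeval_X, eval_X]
      refine Fin.lastCases ?_ (fun i => ?_) i
      · rw [Fin.snoc_last, Fin.snoc_last]
        simp
      · rw [Fin.snoc_castSucc, Fin.snoc_castSucc]
        simp
  let L : Polynomial ℂ := slice G * Polynomial.C (1 / (2 * I)) -
    ∑ j, slice (F j) * Polynomial.C (PhiD P Q R j z)
  have hL (t : ℂ) : L.eval t =
      eval (Fin.snoc z (t + I * Phi P Q R z) : Fin 4 → ℂ) G / (2 * I) -
        ∑ j, eval (Fin.snoc z (t + I * Phi P Q R z) : Fin 4 → ℂ) (F j) * PhiD P Q R j z := by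
    simp only [L, Polynomial.eval_sub, Polynomial.eval_mul, Polynomial.eval_finsetSum,
      Polynomial.eval_C, hslice, mul_one_div]
  have hzero : L = 0 := by
    refine Polynomial.eq_zero_of_infinite_isRoot L
      ((Set.infinite_range_of_injective Complex.ofReal_injective).mono ?_)
    rintro _ ⟨u, rfl⟩
    exact (hL u).trans (h z u)
  have hw := hL (w - I * Phi P Q R z)
  rw [hzero, Polynomial.eval_zero, sub_add_cancel] at hw
  exact hw.symm

/-- A holomorphic tangent field annihilates `P`, `Q`, `R` and has no `∂/∂w` component, as soon as
the Jacobian determinant does not vanish. -/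
theorem HoloTangent.annihilates {P Q R : MvPolynomial (Fin 3) ℂ}
    {F : Fin 3 → MvPolynomial (Fin 4) ℂ} {G : MvPolynomial (Fin 4) ℂ}
    (hJ : (Matrix.of fun i j => pderiv i (![P, Q, R] j)).det ≠ 0)
    (h : HoloTangent P Q R F G) :
    (∀ k, ∑ j, F j * rename Fin.castSucc (pderiv j (![P, Q, R] k)) = 0) ∧ G = 0 := by
  let A (k : Fin 3) : MvPolynomial (Fin 4) ℂ :=
    ∑ j, F j * rename Fin.castSucc (pderiv j (![P, Q, R] k))
  have key (x ζ : Fin 4 → ℂ) := sum_eval_mul_conj_eval_eq_zero Finset.univ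
    ![A 1, A 0, A 2, -(C (1 / (2 * I)) * G)]
    ![rename Fin.castSucc P, rename Fin.castSucc Q, rename Fin.castSucc R, 1]
    (fun y => by
      have hy := h.eval_snoc (Fin.init y) (y (Fin.last 3))
      rw [Fin.snoc_init_self] at hy
      have hcomp : y ∘ Fin.castSucc = Fin.init y := rfl
      simp only [Fin.sum_univ_four, Fin.sum_univ_three, A, PhiD, Matrix.cons_val, map_add,
        map_mul, map_neg, eval_C, eval_rename, hcomp, map_one] at hy ⊢
      linear_combination -hy) x ζ
  have hpt (x : Fin 4 → ℂ) : (∀ k, eval x (A k) = 0) ∧ eval x G = 0 := by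
    have hrel := eq_zero_of_sum_C_mul_add_C_eq_zero ![P, Q, R] hJ
      (fun k => (starRingEnd ℂ) (eval x (![A 1, A 0, A 2] k)))
      ((starRingEnd ℂ) (eval x (-(C (1 / (2 * I)) * G)))) (by
        refine MvPolynomial.funext fun ζ => ?_
        have hk := congrArg (starRingEnd ℂ) (key x (Fin.snoc ζ 0))
        have hcomp : (Fin.snoc ζ 0 : Fin 4 → ℂ) ∘ Fin.castSucc = ζ := by
          funext i
          simp
        simp only [Fin.sum_univ_four, Fin.sum_univ_three, Matrix.cons_val, map_add, map_mul,
          eval_C, eval_rename, hcomp, map_one, map_zero, Complex.conj_conj, mul_one] at hk ⊢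
        exact hk)
    have hA (k : Fin 3) : eval x (![A 1, A 0, A 2] k) = 0 := by
      simpa using congrFun hrel.1 k
    refine ⟨fun k => ?_, by simpa using hrel.2⟩
    fin_cases k
    exacts [hA 1, hA 0, hA 2]
  exact ⟨fun k => MvPolynomial.funext fun x => by simpa [A] using (hpt x).1 k,
    MvPolynomial.funext fun x => by simpa using (hpt x).2⟩

/-- For homogeneous `P, Q, R` with `deg P + deg Q = 2·deg R`, the
model `M = {Im w = P·conj Q + Q·conj P + R·conj R}` is holomorphically nondegenerate
iff the Jacobian determinant `J(P,Q,R)` is not the zero polynomial. -/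
theorem stmt6 (P Q R : MvPolynomial (Fin 3) ℂ) (p q r : ℕ)
    (hP : P.IsHomogeneous p) (hQ : Q.IsHomogeneous q) (hR : R.IsHomogeneous r)
    (hdeg : p + q = 2 * r) :
    HoloNondeg P Q R ↔
      (Matrix.of fun i j => pderiv i (![P, Q, R] j)).det ≠ 0 := by
  have hinj := rename_injective (R := ℂ) _ (Fin.castSucc_injective 3)
  constructor
  · intro hM hdet
    obtain ⟨v, hv, hv0⟩ := Matrix.exists_vecMul_eq_zero_iff.mpr hdet
    refine hv (funext fun j => hinj ?_)
    rw [Pi.zero_apply, map_zero]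
    refine (hM (fun j => rename Fin.castSucc (v j)) 0 fun z u => ?_).1 j
    have hk (k : Fin 3) : ∑ j, eval z (v j) * eval z (pderiv j (![P, Q, R] k)) = 0 := by
      simpa [Matrix.vecMul, dotProduct] using congrArg (eval z) (congrFun hv0 k)
    have hcomp (w : ℂ) : (Fin.snoc z w : Fin 4 → ℂ) ∘ Fin.castSucc = z := by
      funext i
      simp
    have h0 := hk 0
    have h1 := hk 1
    have h2 := hk 2
    simp only [Fin.sum_univ_three, Matrix.cons_val, PhiD, eval_rename, hcomp, map_zero,
      zero_div] at h0 h1 h2 ⊢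
    linear_combination -(starRingEnd ℂ) (eval z Q) * h0 - (starRingEnd ℂ) (eval z P) * h1 -
      (starRingEnd ℂ) (eval z R) * h2
  · intro hJ F G hFG
    obtain ⟨hA, hG⟩ := hFG.annihilates hJ
    refine ⟨fun j => congrFun (?_ : F = 0) j, hG⟩
    refine Matrix.eq_zero_of_vecMul_eq_zero
      (M := (rename Fin.castSucc).toRingHom.mapMatrix
        (Matrix.of fun i j => pderiv i (![P, Q, R] j))) ?_ (funext fun k => ?_)
    · rw [← RingHom.map_det]
      exact (map_ne_zero_iff _ hinj).mpr hJ
    · simpa [Matrix.vecMul, dotProduct] using hA k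
end
end

section
/- Let P = c_P z₁^{α₁}z₂^{α₂}z₃^{α₃}, Q = c_Q z₁^{β₁}z₂^{β₂}z₃^{β₃}, R = c_R z₁^{γ₁}z₂^{γ₂}z₃^{γ₃} be monomials with nonzero coefficients c_P, c_Q, c_R ∈ ℂ and deg P + deg Q = 2·deg R, let Φ(z) = P(z)·conj(Q(z)) + Q(z)·conj(P(z)) + R(z)·conj(R(z)) and M = {(z,w) ∈ ℂ³×ℂ : Im w = Φ(z)}. Then M is holomorphically nondegenerate if and only if the determinant of the 3×3 matrix whose columns are (α₁,α₂,α₃), (β₁,β₂,β₃), (γ₁,γ₂,γ₃) is nonzero. -/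
open MvPolynomial Complex

noncomputable section

/-- The monomial `c·z₁^{e₁} z₂^{e₂} z₃^{e₃}`. -/
def mon (c : ℂ) (e : Fin 3 → ℕ) : MvPolynomial (Fin 3) ℂ :=
  C c * X 0 ^ e 0 * X 1 ^ e 1 * X 2 ^ e 2

/-- Total degree of the exponent vector `e`. -/
def degE (e : Fin 3 → ℕ) : ℕ := e 0 + e 1 + e 2

/-- The determinant of the 3×3 matrix whose columns are the exponent vectors
`a`, `b`, `g` of the three monomials. -/
def edet (a b g : Fin 3 → ℕ) : ℤ :=
  Matrix.det !![(a 0 : ℤ), (b 0 : ℤ), (g 0 : ℤ);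
                (a 1 : ℤ), (b 1 : ℤ), (g 1 : ℤ);
                (a 2 : ℤ), (b 2 : ℤ), (g 2 : ℤ)]

open ComplexConjugate in
/-- A polynomial in `z` and `conj z` that vanishes identically is the zero polynomial. -/
lemma eq_zero_of_eval_conj_eq_zero {σ : Type*} (p : MvPolynomial (σ ⊕ σ) ℂ)
    (h : ∀ z : σ → ℂ, eval (Sum.elim z fun j => conj (z j)) p = 0) : p = 0 := by
  set q : MvPolynomial (σ ⊕ σ) ℂ :=
    bind₁ (Sum.elim (fun j => X (Sum.inl j) + C I * X (Sum.inr j))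
      (fun j => X (Sum.inl j) - C I * X (Sum.inr j))) p with hq
  have eval_q (x : σ ⊕ σ → ℂ) : eval x q =
      eval (Sum.elim (fun j => x (Sum.inl j) + I * x (Sum.inr j))
        (fun j => x (Sum.inl j) - I * x (Sum.inr j))) p := by
    rw [hq, ← aeval_eq_eval, ← aeval_eq_eval, aeval_bind₁]
    congr 2
    funext i
    cases i <;> simp
  have q_eq_zero : q = 0 := by
    refine funext_set (fun _ => Set.range ((↑) : ℝ → ℂ))
      (fun _ => Set.infinite_range_of_injective Complex.ofReal_injective) fun x hx => ?_
    rw [map_zero, eval_q, ← h fun j => x (Sum.inl j) + I * x (Sum.inr j)]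
    congr 2
    funext i
    rcases i with j | j
    · rfl
    · obtain ⟨s, hs⟩ := hx (Sum.inl j) trivial
      obtain ⟨t, ht⟩ := hx (Sum.inr j) trivial
      simp [← hs, ← ht, sub_eq_add_neg]
  refine MvPolynomial.funext fun x => ?_
  have hx := eval_q (Sum.elim (fun j => (x (Sum.inl j) + x (Sum.inr j)) / 2)
    (fun j => (x (Sum.inl j) - x (Sum.inr j)) / (2 * I)))
  rw [q_eq_zero, map_zero] at hx
  rw [map_zero, hx]
  congr 2
  funext i
  rcases i with j | j <;> simp <;> field_simp <;> ring

/-- Restriction of a polynomial in `(z, w)` to a fixed value of `z`. -/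
def fixInit (z : Fin 3 → ℂ) (p : MvPolynomial (Fin 4) ℂ) : Polynomial ℂ :=
  aeval (Fin.snoc (α := fun _ => Polynomial ℂ) (fun i => Polynomial.C (z i)) Polynomial.X) p

lemma eval_fixInit (z : Fin 3 → ℂ) (w : ℂ) (p : MvPolynomial (Fin 4) ℂ) :
    (fixInit z p).eval w = eval (Fin.snoc z w : Fin 4 → ℂ) p := by
  rw [fixInit, aeval_def, polynomial_eval_eval₂, ← eval₂_id]
  congr 1
  · ext; simp
  · funext i
    refine Fin.lastCases ?_ (fun j => ?_) i
    · simp only [Fin.snoc_last, Polynomial.eval_X]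
    · simp

/-- Restriction of a polynomial in `(z, w)` to a fixed value of `w`. -/
def fixLast (w : ℂ) (p : MvPolynomial (Fin 4) ℂ) : MvPolynomial (Fin 3) ℂ :=
  aeval (Fin.snoc (α := fun _ => MvPolynomial (Fin 3) ℂ) X (C w)) p

lemma eval_fixLast (z : Fin 3 → ℂ) (w : ℂ) (p : MvPolynomial (Fin 4) ℂ) :
    eval z (fixLast w p) = eval (Fin.snoc z w : Fin 4 → ℂ) p := by
  rw [fixLast, aeval_def, eval_eval₂, ← eval₂_id]
  congr 1
  · ext; simp
  · funext i
    refine Fin.lastCases ?_ (fun j => ?_) i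
    · simp only [Fin.snoc_last, eval_C]
    · simp

/-- A polynomial in four variables that vanishes off the hyperplanes `z_j = 0` is zero. -/
lemma eq_zero_of_eval_snoc_eq_zero (p : MvPolynomial (Fin 4) ℂ)
    (h : ∀ (z : Fin 3 → ℂ) (w : ℂ), (∀ j, z j ≠ 0) →
      eval (Fin.snoc z w : Fin 4 → ℂ) p = 0) : p = 0 := by
  refine funext_set (fun _ => {0}ᶜ) (fun _ => (Set.finite_singleton 0).infinite_compl)
    fun x hx => ?_
  rw [map_zero, ← h (Fin.init x) (x (Fin.last 3)) fun j => hx j.castSucc trivial,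
    Fin.snoc_init_self]

/-- The tangency equation of `M` extends from `M` to all of `ℂ³ × ℂ`, with `z` and `w`
independent. -/
lemma HoloTangent.eq_sum {P Q R : MvPolynomial (Fin 3) ℂ}
    {F : Fin 3 → MvPolynomial (Fin 4) ℂ} {G : MvPolynomial (Fin 4) ℂ}
    (h : HoloTangent P Q R F G) (z : Fin 3 → ℂ) (w : ℂ) :
    eval (Fin.snoc z w : Fin 4 → ℂ) G / (2 * I) =
      ∑ j, eval (Fin.snoc z w : Fin 4 → ℂ) (F j) * PhiD P Q R j z := by
  set D : Polynomial ℂ := fixInit z G * Polynomial.C (2 * I)⁻¹ -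
    ∑ j, fixInit z (F j) * Polynomial.C (PhiD P Q R j z) with hD
  have eval_D (w : ℂ) : D.eval w = eval (Fin.snoc z w : Fin 4 → ℂ) G / (2 * I) -
      ∑ j, eval (Fin.snoc z w : Fin 4 → ℂ) (F j) * PhiD P Q R j z := by
    simp only [hD, Polynomial.eval_sub, Polynomial.eval_mul, Polynomial.eval_C,
      Polynomial.eval_finsetSum, eval_fixInit, div_eq_mul_inv]
  have D_eq_zero : D = 0 := by
    refine D.eq_zero_of_infinite_isRoot ((Set.infinite_range_of_injective
      (f := fun u : ℝ => (u : ℂ) + I * Phi P Q R z)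
      fun u v huv => Complex.ofReal_injective (add_right_cancel huv)).mono ?_)
    rintro _ ⟨u, rfl⟩
    exact (eval_D _).trans (h z u)
  rw [← sub_eq_zero, ← eval_D, D_eq_zero, Polynomial.eval_zero]

lemma mon_eq_monomial (c : ℂ) (e : Fin 3 → ℕ) :
    mon c e = monomial (Finsupp.equivFunOnFinite.symm e) c := by
  rw [monomial_eq, Finsupp.prod_fintype _ _ (by simp), Fin.prod_univ_three]
  simp [mon, mul_assoc]

lemma eval_mon (c : ℂ) (e : Fin 3 → ℕ) (z : Fin 3 → ℂ) :
    eval z (mon c e) = c * z 0 ^ e 0 * z 1 ^ e 1 * z 2 ^ e 2 := by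
  simp [mon]

lemma mul_eval_pderiv_mon (c : ℂ) (e : Fin 3 → ℕ) (z : Fin 3 → ℂ) (j : Fin 3) :
    z j * eval z (pderiv j (mon c e)) = e j * eval z (mon c e) := by
  have h := congrArg (eval z) (X_mul_pderiv_monomial (i := j)
    (m := Finsupp.equivFunOnFinite.symm e) (r := c))
  simpa [← mon_eq_monomial] using h

lemma conj_eval_mon (c : ℂ) (e : Fin 3 → ℕ) (z : Fin 3 → ℂ) :
    starRingEnd ℂ (eval z (mon c e)) =
      eval (fun j => starRingEnd ℂ (z j)) (mon (starRingEnd ℂ c) e) := by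
  simp [eval_mon]

/-- Three distinct nonconstant monomials are linearly independent together with `1`. -/
lemma coeffs_eq_zero_of_forall_eval_mon {a b g : Fin 3 → ℕ} (hab : a ≠ b) (hag : a ≠ g)
    (hbg : b ≠ g) (ha : a ≠ 0) (hb : b ≠ 0) (hg : g ≠ 0) {p q r : ℂ} (hp : p ≠ 0) (hq : q ≠ 0)
    (hr : r ≠ 0) {k x y t : ℂ}
    (h : ∀ ζ, k = x * eval ζ (mon p a) + y * eval ζ (mon q b) + t * eval ζ (mon r g)) :
    k = 0 ∧ x = 0 ∧ y = 0 ∧ t = 0 := by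
  have hpoly : C k = C x * mon p a + C y * mon q b + C t * mon r g :=
    MvPolynomial.funext fun ζ => by simpa using h ζ
  have hcoeff (m : Fin 3 → ℕ) :=
    congrArg (coeff (Finsupp.equivFunOnFinite.symm m)) hpoly
  have hzero : (0 : Fin 3 →₀ ℕ) = Finsupp.equivFunOnFinite.symm 0 := by ext; rfl
  simp only [mon_eq_monomial, coeff_add, coeff_C_mul, coeff_monomial, coeff_C, hzero,
    Equiv.apply_eq_iff_eq] at hcoeff
  have h0 := hcoeff 0
  have h1 := hcoeff a
  have h2 := hcoeff b
  have h3 := hcoeff g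
  simp_all [Ne.symm]

lemma edet_eq_zero_iff (a b g : Fin 3 → ℕ) :
    edet a b g = 0 ↔ ∃ v : Fin 3 → ℤ, v ≠ 0 ∧ ∑ j, v j * a j = 0 ∧ ∑ j, v j * b j = 0 ∧
      ∑ j, v j * g j = 0 := by
  rw [edet, ← Matrix.exists_vecMul_eq_zero_iff]
  simp [funext_iff, Fin.forall_fin_succ, Fin.sum_univ_three, Matrix.vecHead, Matrix.vecTail,
    add_assoc]

/-- The columns of an invertible exponent matrix have trivial common annihilator in `ℂ³`. -/
lemma eq_zero_of_edet_ne_zero {a b g : Fin 3 → ℕ} (h : edet a b g ≠ 0) {v : Fin 3 → ℂ}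
    (ha : ∑ j, v j * a j = 0) (hb : ∑ j, v j * b j = 0) (hg : ∑ j, v j * g j = 0) : v = 0 := by
  set M : Matrix (Fin 3) (Fin 3) ℤ := !![(a 0 : ℤ), (b 0 : ℤ), (g 0 : ℤ);
                (a 1 : ℤ), (b 1 : ℤ), (g 1 : ℤ);
                (a 2 : ℤ), (b 2 : ℤ), (g 2 : ℤ)] with hM
  have hdet : (M.map (Int.castRingHom ℂ)).det ≠ 0 := by
    rw [← RingHom.mapMatrix_apply, ← RingHom.map_det]
    simpa [edet] using h
  refine Matrix.eq_zero_of_vecMul_eq_zero hdet ?_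
  simp only [Fin.sum_univ_three] at ha hb hg
  simp [hM, funext_iff, Fin.forall_fin_succ, Matrix.vecMul, dotProduct, Fin.sum_univ_three,
    ha, hb, hg]

/-- The weighted Euler field `Σ v_j z_j ∂/∂z_j` of weights annihilating all three exponent
vectors is tangent to `M`. -/
lemma holoTangent_euler (cP cQ cR : ℂ) {a b g : Fin 3 → ℕ} {v : Fin 3 → ℤ}
    (ha : ∑ j, v j * a j = 0) (hb : ∑ j, v j * b j = 0) (hg : ∑ j, v j * g j = 0) :
    HoloTangent (mon cP a) (mon cQ b) (mon cR g)
      (fun j => C (v j : ℂ) * X j.castSucc) 0 := by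
  intro z u
  have key (c : ℂ) (e : Fin 3 → ℕ) (he : ∑ j, v j * e j = 0) :
      ∑ j, (v j : ℂ) * z j * eval z (pderiv j (mon c e)) = 0 := by
    have he' : ∑ j, (v j : ℂ) * (e j : ℂ) = 0 := by exact_mod_cast he
    simp only [mul_assoc, mul_eval_pderiv_mon]
    simp only [← mul_assoc, ← Finset.sum_mul, he', zero_mul]
  simp only [map_zero, zero_div, zero_sub, neg_eq_zero, map_mul, eval_C, eval_X,
    Fin.snoc_castSucc, PhiD, mul_add, ← mul_assoc, Finset.sum_add_distrib, ← Finset.sum_mul,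
    key _ _ ha, key _ _ hb, key _ _ hg, zero_mul, add_zero]

/-- For monomials with distinct nonzero exponents, a tangent field has `G = 0` and annihilates
each of the three monomials. -/
lemma HoloTangent.annihilates_s7 {cP cQ cR : ℂ} (hcP : cP ≠ 0) (hcQ : cQ ≠ 0) (hcR : cR ≠ 0)
    {a b g : Fin 3 → ℕ} (hab : a ≠ b) (hag : a ≠ g) (hbg : b ≠ g) (ha : a ≠ 0) (hb : b ≠ 0)
    (hg : g ≠ 0) {F : Fin 3 → MvPolynomial (Fin 4) ℂ} {G : MvPolynomial (Fin 4) ℂ}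
    (h : HoloTangent (mon cP a) (mon cQ b) (mon cR g) F G) (z : Fin 3 → ℂ) (w : ℂ) :
    eval (Fin.snoc z w : Fin 4 → ℂ) G = 0 ∧
      ∑ j, eval (Fin.snoc z w : Fin 4 → ℂ) (F j) * eval z (pderiv j (mon cQ b)) = 0 ∧
      ∑ j, eval (Fin.snoc z w : Fin 4 → ℂ) (F j) * eval z (pderiv j (mon cP a)) = 0 ∧
      ∑ j, eval (Fin.snoc z w : Fin 4 → ℂ) (F j) * eval z (pderiv j (mon cR g)) = 0 := by
  set S : MvPolynomial (Fin 3) ℂ → MvPolynomial (Fin 3) ℂ :=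
    fun p => ∑ j, fixLast w (F j) * pderiv j p with hS
  have eval_S (z : Fin 3 → ℂ) (p : MvPolynomial (Fin 3) ℂ) : eval z (S p) =
      ∑ j, eval (Fin.snoc z w : Fin 4 → ℂ) (F j) * eval z (pderiv j p) := by
    simp [hS, eval_fixLast]
  set D : MvPolynomial (Fin 3 ⊕ Fin 3) ℂ :=
    rename Sum.inl (fixLast w G) * C (2 * I)⁻¹ -
      (rename Sum.inl (S (mon cQ b)) * rename Sum.inr (mon (starRingEnd ℂ cP) a) +
        rename Sum.inl (S (mon cP a)) * rename Sum.inr (mon (starRingEnd ℂ cQ) b) +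
        rename Sum.inl (S (mon cR g)) * rename Sum.inr (mon (starRingEnd ℂ cR) g)) with hD
  have eval_D (z ζ : Fin 3 → ℂ) : eval (Sum.elim z ζ) D =
      eval (Fin.snoc z w : Fin 4 → ℂ) G / (2 * I) -
      (eval z (S (mon cQ b)) * eval ζ (mon (starRingEnd ℂ cP) a) +
        eval z (S (mon cP a)) * eval ζ (mon (starRingEnd ℂ cQ) b) +
        eval z (S (mon cR g)) * eval ζ (mon (starRingEnd ℂ cR) g)) := by
    simp only [hD, map_sub, map_add, map_mul, eval_rename, eval_C, Sum.elim_comp_inl,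
      Sum.elim_comp_inr, eval_fixLast, div_eq_mul_inv]
  have D_eq_zero : D = 0 := by
    refine eq_zero_of_eval_conj_eq_zero D fun z => ?_
    rw [eval_D, h.eq_sum z w, sub_eq_zero]
    simp only [PhiD, conj_eval_mon, eval_S, Finset.sum_mul, ← Finset.sum_add_distrib]
    exact Finset.sum_congr rfl fun j _ => by ring
  have hz := coeffs_eq_zero_of_forall_eval_mon hab hag hbg ha hb hg
    ((map_ne_zero (starRingEnd ℂ)).2 hcP) ((map_ne_zero (starRingEnd ℂ)).2 hcQ)
    ((map_ne_zero (starRingEnd ℂ)).2 hcR)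
    fun ζ => sub_eq_zero.1 ((eval_D z ζ).symm.trans (by rw [D_eq_zero, map_zero]))
  simpa [eval_S] using hz

lemma sum_div_mul_exponent_eq_zero {c : ℂ} (hc : c ≠ 0) (e : Fin 3 → ℕ) {z : Fin 3 → ℂ}
    (hz : ∀ j, z j ≠ 0) {f : Fin 3 → ℂ} (h : ∑ j, f j * eval z (pderiv j (mon c e)) = 0) :
    ∑ j, f j / z j * e j = 0 := by
  have hne : eval z (mon c e) ≠ 0 := by simp [eval_mon, hc, hz]
  refine (mul_eq_zero.1 ?_).resolve_right hne
  rw [← h, Finset.sum_mul]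
  refine Finset.sum_congr rfl fun j _ => ?_
  rw [mul_assoc, ← mul_eval_pderiv_mon, ← mul_assoc, div_mul_cancel₀ _ (hz j)]

/-- For monomials `P = c_P z^α`, `Q = c_Q z^β`, `R = c_R z^γ` with
nonzero coefficients and `deg P + deg Q = 2·deg R`, the model `M` is holomorphically
nondegenerate iff the determinant of the exponent matrix is nonzero. -/
theorem stmt7 (cP cQ cR : ℂ) (hcP : cP ≠ 0) (hcQ : cQ ≠ 0) (hcR : cR ≠ 0)
    (a b g : Fin 3 → ℕ)
    (hdeg : degE a + degE b = 2 * degE g) :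
    HoloNondeg (mon cP a) (mon cQ b) (mon cR g) ↔ edet a b g ≠ 0 := by
  constructor
  · intro hnd hdet
    obtain ⟨v, hv, ha, hb, hg⟩ := (edet_eq_zero_iff a b g).1 hdet
    have hF := (hnd _ _ (holoTangent_euler cP cQ cR ha hb hg)).1
    exact hv (_root_.funext fun j => by simpa using hF j)
  · intro hdet F G hFG
    have hab : a ≠ b := by rintro rfl; apply hdet; simp [edet, Matrix.det_fin_three]
    have hag : a ≠ g := by rintro rfl; apply hdet; simp [edet, Matrix.det_fin_three]
    have hbg : b ≠ g := by rintro rfl; apply hdet; simp [edet, Matrix.det_fin_three]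
    have ha : a ≠ 0 := by rintro rfl; apply hdet; simp [edet, Matrix.det_fin_three]
    have hb : b ≠ 0 := by rintro rfl; apply hdet; simp [edet, Matrix.det_fin_three]
    have hg : g ≠ 0 := by rintro rfl; apply hdet; simp [edet, Matrix.det_fin_three]
    have hann := hFG.annihilates_s7 hcP hcQ hcR hab hag hbg ha hb hg
    refine ⟨fun j => eq_zero_of_eval_snoc_eq_zero _ fun z w hz => ?_,
      eq_zero_of_eval_snoc_eq_zero _ fun z w _ => (hann z w).1⟩
    obtain ⟨-, hQ, hP, hR⟩ := hann z w
    have hzero := congrFun (eq_zero_of_edet_ne_zero hdet (sum_div_mul_exponent_eq_zero hcP a hz hP)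
      (sum_div_mul_exponent_eq_zero hcQ b hz hQ) (sum_div_mul_exponent_eq_zero hcR g hz hR)) j
    exact (div_eq_zero_iff.1 hzero).resolve_right (hz j)
end
end

section
/- Let P, Q, R ∈ ℂ[z₁,z₂,z₃] be homogeneous polynomials with deg P + deg Q = 2·deg R, and suppose the Jacobian determinant J(P,Q,R) is not the zero polynomial (equivalently, M is holomorphically nondegenerate). Then the real vector space g_c has dimension at most 3, i.e. 0 ≤ dim_ℝ g_c ≤ 3. -/
open MvPolynomial Complex

noncomputable section

/-- `g_c`: rigid infinitesimal CR automorphisms `Σ f_j(z) ∂/∂z_j` of `M` all of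
whose monomials have total degree at least `2` and at most `d`. -/
def gcSet (P Q R : MvPolynomial (Fin 3) ℂ) (d : ℕ) : Set (Fin 3 → MvPolynomial (Fin 3) ℂ) :=
  {f | (∀ j, ∀ m ∈ (f j).support, 2 ≤ (m.sum fun _ e => e) ∧ (m.sum fun _ e => e) ≤ d) ∧
       ∀ z : Fin 3 → ℂ, (∑ j, eval z (f j) * PhiD P Q R j z).re = 0}

section Polarization

variable {σ ι : Type*}

theorem eval_bind₁_eq {τ : Type*} (v : τ → ℂ) (g : σ → MvPolynomial τ ℂ)
    (F : MvPolynomial σ ℂ) :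
    eval v (bind₁ g F) = eval (fun j => eval v (g j)) F := by
  induction F using MvPolynomial.induction_on with
  | C a => simp
  | add a b ha hb => simp [ha, hb]
  | mul_X a j ha => simp [ha]

theorem eval_map_conj (G : MvPolynomial σ ℂ) (w : σ → ℂ) :
    eval (fun j => (starRingEnd ℂ) (w j)) (map (starRingEnd ℂ) G) =
      (starRingEnd ℂ) (eval w G) := by
  induction G using MvPolynomial.induction_on with
  | C a => simp
  | add a b ha hb => simp [ha, hb]
  | mul_X a j ha => simp [ha]

/-- Polarization: a sesquiholomorphic polynomial identity on the diagonal holds everywhere. -/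
theorem sum_eval_mul_conj_eval_eq_zero_s11 [Fintype ι] (F G : ι → MvPolynomial σ ℂ)
    (h : ∀ z, ∑ i, eval z (F i) * (starRingEnd ℂ) (eval z (G i)) = 0) (z w : σ → ℂ) :
    ∑ i, eval z (F i) * (starRingEnd ℂ) (eval w (G i)) = 0 := by
  let H : MvPolynomial (σ ⊕ σ) ℂ := ∑ i,
    bind₁ (fun j => X (Sum.inl j) + C I * X (Sum.inr j)) (F i) *
    bind₁ (fun j => X (Sum.inl j) - C I * X (Sum.inr j)) (map (starRingEnd ℂ) (G i))
  have hH (v : σ ⊕ σ → ℂ) : eval v H = ∑ i,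
      eval (fun j => v (Sum.inl j) + I * v (Sum.inr j)) (F i) *
      eval (fun j => v (Sum.inl j) - I * v (Sum.inr j)) (map (starRingEnd ℂ) (G i)) := by
    simp only [H, map_sum, map_mul, eval_bind₁_eq, map_add, map_sub, eval_X, eval_C]
  have hzero : H = 0 := by
    refine MvPolynomial.funext_set (fun _ => Set.range ((↑) : ℝ → ℂ))
      (fun _ => Set.infinite_range_of_injective Complex.ofReal_injective) fun v hv => ?_
    have hreal (s : σ ⊕ σ) : (starRingEnd ℂ) (v s) = v s := by
      obtain ⟨x, hx⟩ := hv s (Set.mem_univ s)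
      rw [← hx, Complex.conj_ofReal]
    rw [hH, map_zero, ← h fun j => v (Sum.inl j) + I * v (Sum.inr j)]
    refine Finset.sum_congr rfl fun i _ => ?_
    rw [← eval_map_conj]
    simp [hreal, sub_eq_add_neg]
  have key := hH (Sum.elim (fun j => (z j + (starRingEnd ℂ) (w j)) / 2)
    (fun j => (z j - (starRingEnd ℂ) (w j)) / (2 * I)))
  rw [hzero, map_zero] at key
  rw [key]
  refine Finset.sum_congr rfl fun i _ => ?_
  rw [← eval_map_conj]
  congr 3
  · funext j
    simp only [Sum.elim_inl, Sum.elim_inr]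
    field_simp
    ring
  · funext j
    simp only [Sum.elim_inl, Sum.elim_inr]
    field_simp
    ring

end Polarization

/-- The derivative of `P` along the polynomial vector field `∑ j, f j ∂/∂z_j`. -/
def fieldDeriv (f : Fin 3 → MvPolynomial (Fin 3) ℂ) (P : MvPolynomial (Fin 3) ℂ) :
    MvPolynomial (Fin 3) ℂ :=
  ∑ j, f j * pderiv j P

theorem homogeneousComponent_fieldDeriv {f : Fin 3 → MvPolynomial (Fin 3) ℂ}
    {P : MvPolynomial (Fin 3) ℂ} {p k : ℕ} (hP : P.IsHomogeneous p)
    (hf : ∀ j, ∀ m ∈ (f j).support, 2 ≤ m.sum fun _ e => e) (hk : k ≤ p) :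
    homogeneousComponent k (fieldDeriv f P) = 0 := by
  ext m
  rw [coeff_homogeneousComponent, coeff_zero]
  split_ifs with hm
  · rw [fieldDeriv, coeff_sum]
    refine Finset.sum_eq_zero fun j _ => ?_
    rw [coeff_mul]
    refine Finset.sum_eq_zero fun x hx => ?_
    by_contra hne
    have h₁ := hf j x.1 (mem_support_iff.mpr (left_ne_zero_of_mul hne))
    have h₂ := (hP.pderiv (i := j)).degree_eq_sum_deg_support
      (mem_support_iff.mpr (right_ne_zero_of_mul hne))
    have h₃ : x.1.degree + x.2.degree = m.degree := by
      rw [← map_add, Finset.HasAntidiagonal.mem_antidiagonal.mp hx]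
    have h₄ : x.1.degree = x.1.sum fun _ e => e := rfl
    have h₅ : x.2.degree = x.2.sum fun _ e => e := rfl
    simp only [Finsupp.sum] at *
    omega
  · rfl

section Model

variable {P Q R : MvPolynomial (Fin 3) ℂ} {p q r : ℕ}

/-- Polynomials with nonvanishing Jacobian are linearly independent. -/
theorem eq_zero_of_smul_add_eq_zero
    (hJ : (Matrix.of fun i j => pderiv i (![P, Q, R] j)).det ≠ 0) {a b c : ℂ}
    (h : a • P + b • Q + c • R = 0) : a = 0 ∧ b = 0 ∧ c = 0 := by
  have hv : (![C a, C b, C c] : Fin 3 → MvPolynomial (Fin 3) ℂ) = 0 := by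
    refine Matrix.eq_zero_of_mulVec_eq_zero hJ ?_
    funext i
    have := congrArg (pderiv i) h
    simp only [map_add, Derivation.map_smul, map_zero] at this
    simp only [smul_eq_C_mul] at this
    simp only [Matrix.mulVec, dotProduct, Fin.sum_univ_three, Matrix.of_apply, Matrix.cons_val,
      Pi.zero_apply]
    linear_combination this
  exact ⟨by simpa using congrFun hv 0, by simpa using congrFun hv 1, by simpa using congrFun hv 2⟩

/-- The polarized tangency equation. -/
theorem polarized_tangency {f : Fin 3 → MvPolynomial (Fin 3) ℂ}
    (hf : ∀ z : Fin 3 → ℂ, (∑ j, eval z (f j) * PhiD P Q R j z).re = 0) (z w : Fin 3 → ℂ) :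
    eval z (fieldDeriv f P) * (starRingEnd ℂ) (eval w Q) +
      eval z (fieldDeriv f Q) * (starRingEnd ℂ) (eval w P) +
      eval z (fieldDeriv f R) * (starRingEnd ℂ) (eval w R) +
      (eval z Q * (starRingEnd ℂ) (eval w (fieldDeriv f P)) +
      eval z P * (starRingEnd ℂ) (eval w (fieldDeriv f Q)) +
      eval z R * (starRingEnd ℂ) (eval w (fieldDeriv f R))) = 0 := by
  have key := sum_eval_mul_conj_eval_eq_zero_s11
    ![fieldDeriv f P, fieldDeriv f Q, fieldDeriv f R, Q, P, R]
    ![Q, P, R, fieldDeriv f P, fieldDeriv f Q, fieldDeriv f R] (fun z => ?_) z w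
  · simp only [Fin.sum_univ_six, Matrix.cons_val] at key
    linear_combination key
  · have h := hf z
    set S := ∑ j, eval z (f j) * PhiD P Q R j z with hS
    have hsum : S + (starRingEnd ℂ) S = 0 := by
      rw [Complex.add_conj, h]
      simp
    have hS' : S = eval z (fieldDeriv f P) * (starRingEnd ℂ) (eval z Q) +
        eval z (fieldDeriv f Q) * (starRingEnd ℂ) (eval z P) +
        eval z (fieldDeriv f R) * (starRingEnd ℂ) (eval z R) := by
      simp only [hS, PhiD, fieldDeriv, Fin.sum_univ_three, map_add, map_mul]
      ring
    rw [hS'] at hsum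
    simp only [map_add, map_mul, Complex.conj_conj] at hsum
    simp only [Fin.sum_univ_six, Matrix.cons_val]
    linear_combination hsum

/-- If `conj(Q(w)) A + conj(P(w)) B + conj(R(w)) D` lies in a subspace `V` for every `w`, then so do
`A`, `B` and `D`. -/
theorem mem_span_of_polarized
    (hJ : (Matrix.of fun i j => pderiv i (![P, Q, R] j)).det ≠ 0)
    {A B D : MvPolynomial (Fin 3) ℂ} {V : Submodule ℂ (MvPolynomial (Fin 3) ℂ)}
    (h : ∀ w : Fin 3 → ℂ, (starRingEnd ℂ) (eval w Q) • A + (starRingEnd ℂ) (eval w P) • B +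
      (starRingEnd ℂ) (eval w R) • D ∈ V) : A ∈ V ∧ B ∈ V ∧ D ∈ V := by
  let L : (Fin 3 → ℂ) →ₗ[ℂ] MvPolynomial (Fin 3) ℂ :=
    Fintype.linearCombination ℂ ![A, B, D]
  have hL (v : Fin 3 → ℂ) : L v = v 0 • A + v 1 • B + v 2 • D := by
    simp [L, Fintype.linearCombination_apply, Fin.sum_univ_three]
  have htop : V.comap L = ⊤ := by
    by_contra hne
    obtain ⟨φ, hφ, hker⟩ := Submodule.exists_le_ker_of_lt_top _ (lt_top_iff_ne_top.mpr hne)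
    have hφv (v : Fin 3 → ℂ) : φ v = v 0 * φ (Pi.single 0 1) + v 1 * φ (Pi.single 1 1) +
        v 2 * φ (Pi.single 2 1) := by
      have hv : v = v 0 • Pi.single 0 1 + v 1 • Pi.single 1 1 + v 2 • Pi.single 2 1 := by
        funext i
        fin_cases i <;> simp
      conv_lhs => rw [hv]
      simp only [map_add, map_smul, smul_eq_mul]
    have hrel : (starRingEnd ℂ) (φ (Pi.single 1 1)) • P + (starRingEnd ℂ) (φ (Pi.single 0 1)) • Q +
        (starRingEnd ℂ) (φ (Pi.single 2 1)) • R = 0 := by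
      refine MvPolynomial.funext fun w => ?_
      have hw : φ ![(starRingEnd ℂ) (eval w Q), (starRingEnd ℂ) (eval w P),
          (starRingEnd ℂ) (eval w R)] = 0 := by
        refine hker ?_
        rw [Submodule.mem_comap, hL]
        exact h w
      rw [hφv] at hw
      simp only [Matrix.cons_val] at hw
      have hw' := congrArg (starRingEnd ℂ) hw
      simp only [map_add, map_mul, Complex.conj_conj, map_zero] at hw'
      simp only [map_add, smul_eval, map_zero]
      linear_combination hw'
    obtain ⟨h₁, h₀, h₂⟩ := eq_zero_of_smul_add_eq_zero hJ hrel
    rw [map_eq_zero] at h₀ h₁ h₂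
    refine hφ (LinearMap.ext fun v => ?_)
    rw [hφv, h₀, h₁, h₂]
    simp
  have hmem (v : Fin 3 → ℂ) : v 0 • A + v 1 • B + v 2 • D ∈ V := by
    rw [← hL, ← Submodule.mem_comap, htop]
    trivial
  exact ⟨by simpa using hmem ![1, 0, 0], by simpa using hmem ![0, 1, 0],
    by simpa using hmem ![0, 0, 1]⟩

theorem fieldDeriv_mem_span (hJ : (Matrix.of fun i j => pderiv i (![P, Q, R] j)).det ≠ 0)
    {f : Fin 3 → MvPolynomial (Fin 3) ℂ}
    (hf : ∀ z : Fin 3 → ℂ, (∑ j, eval z (f j) * PhiD P Q R j z).re = 0) :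
    fieldDeriv f P ∈ Submodule.span ℂ {P, Q, R} ∧ fieldDeriv f Q ∈ Submodule.span ℂ {P, Q, R} ∧
      fieldDeriv f R ∈ Submodule.span ℂ {P, Q, R} := by
  refine mem_span_of_polarized hJ fun w => Submodule.mem_span_triple.mpr
    ⟨-(starRingEnd ℂ) (eval w (fieldDeriv f Q)), -(starRingEnd ℂ) (eval w (fieldDeriv f P)),
      -(starRingEnd ℂ) (eval w (fieldDeriv f R)), MvPolynomial.funext fun z => ?_⟩
  simp only [map_add, smul_eval]
  linear_combination -polarized_tangency hf z w

/-- A combination of `P, Q, R` without homogeneous components in the degrees up to `k`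
only involves those of `P, Q, R` that have degree larger than `k`. -/
theorem smul_add_of_homogeneousComponent_eq_zero (hP : P.IsHomogeneous p) (hQ : Q.IsHomogeneous q)
    (hR : R.IsHomogeneous r) (hJ : (Matrix.of fun i j => pderiv i (![P, Q, R] j)).det ≠ 0)
    {a b c : ℂ} {k : ℕ} (h : ∀ l ≤ k, homogeneousComponent l (a • P + b • Q + c • R) = 0) :
    (p ≤ k → a = 0) ∧ (q ≤ k → b = 0) ∧ (r ≤ k → c = 0) := by
  have comp (l : ℕ) (hl : l ≤ k) : (if l = p then a else 0) • P + (if l = q then b else 0) • Q +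
      (if l = r then c else 0) • R = 0 := by
    have := h l hl
    rw [map_add, map_add, map_smul, map_smul, map_smul, homogeneousComponent_of_mem hP,
      homogeneousComponent_of_mem hQ, homogeneousComponent_of_mem hR] at this
    simpa only [smul_ite, ite_smul, smul_zero, zero_smul] using this
  refine ⟨fun hk => ?_, fun hk => ?_, fun hk => ?_⟩
  · simpa using (eq_zero_of_smul_add_eq_zero hJ (comp p hk)).1
  · simpa using (eq_zero_of_smul_add_eq_zero hJ (comp q hk)).2.1
  · simpa using (eq_zero_of_smul_add_eq_zero hJ (comp r hk)).2.2

/-- The action on `(P, Q, R)` of an element of `g_c`, when `deg P ≤ deg Q`. -/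
theorem exists_fieldDeriv_eq (hP : P.IsHomogeneous p) (hQ : Q.IsHomogeneous q)
    (hR : R.IsHomogeneous r) (hdeg : p + q = 2 * r) (hpq : p ≤ q)
    (hJ : (Matrix.of fun i j => pderiv i (![P, Q, R] j)).det ≠ 0) {d : ℕ}
    {f : Fin 3 → MvPolynomial (Fin 3) ℂ} (hf : f ∈ gcSet P Q R d) :
    ∃ (a : ℂ) (t : ℝ), fieldDeriv f P = a • R + (t * I : ℂ) • Q ∧ fieldDeriv f Q = 0 ∧
      fieldDeriv f R = -(starRingEnd ℂ) a • Q := by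
  obtain ⟨hsupp, htan⟩ := hf
  have hsupp' : ∀ j, ∀ m ∈ (f j).support, 2 ≤ m.sum fun _ e => e :=
    fun j m hm => (hsupp j m hm).1
  obtain ⟨hA, hB, hD⟩ := fieldDeriv_mem_span hJ htan
  obtain ⟨a₁, a₂, a₃, hA⟩ := Submodule.mem_span_triple.mp hA
  obtain ⟨b₁, b₂, b₃, hB⟩ := Submodule.mem_span_triple.mp hB
  obtain ⟨c₁, c₂, c₃, hD⟩ := Submodule.mem_span_triple.mp hD
  obtain ⟨ha₁, -, -⟩ := smul_add_of_homogeneousComponent_eq_zero hP hQ hR hJ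
    (a := a₁) (b := a₂) (c := a₃) fun l hl => hA ▸ homogeneousComponent_fieldDeriv hP hsupp' hl
  obtain ⟨hb₁, hb₂, hb₃⟩ := smul_add_of_homogeneousComponent_eq_zero hP hQ hR hJ
    (a := b₁) (b := b₂) (c := b₃) fun l hl => hB ▸ homogeneousComponent_fieldDeriv hQ hsupp' hl
  obtain ⟨hc₁, -, hc₃⟩ := smul_add_of_homogeneousComponent_eq_zero hP hQ hR hJ
    (a := c₁) (b := c₂) (c := c₃) fun l hl => hD ▸ homogeneousComponent_fieldDeriv hR hsupp' hl
  rw [ha₁ le_rfl, zero_smul, zero_add] at hA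
  rw [hb₁ hpq, hb₂ le_rfl, hb₃ (by omega), zero_smul, zero_smul, zero_smul, add_zero,
    add_zero] at hB
  rw [hc₁ (by omega), hc₃ le_rfl, zero_smul, zero_smul, zero_add, add_zero] at hD
  have hrel (w : Fin 3 → ℂ) : (a₃ + (starRingEnd ℂ) c₂) * (starRingEnd ℂ) (eval w Q) = 0 ∧
      (a₂ + (starRingEnd ℂ) a₂) * (starRingEnd ℂ) (eval w Q) +
        (c₂ + (starRingEnd ℂ) a₃) * (starRingEnd ℂ) (eval w R) = 0 := by
    have hcomb : (0 : ℂ) • P + ((a₂ + (starRingEnd ℂ) a₂) * (starRingEnd ℂ) (eval w Q) +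
        (c₂ + (starRingEnd ℂ) a₃) * (starRingEnd ℂ) (eval w R)) • Q +
        ((a₃ + (starRingEnd ℂ) c₂) * (starRingEnd ℂ) (eval w Q)) • R = 0 := by
      refine MvPolynomial.funext fun z => ?_
      have key := polarized_tangency htan z w
      rw [← hA, ← hB, ← hD] at key
      simp only [map_add, smul_eval, map_mul, map_zero] at key ⊢
      linear_combination key
    obtain ⟨-, h₂, h₁⟩ := eq_zero_of_smul_add_eq_zero hJ hcomb
    exact ⟨h₁, h₂⟩
  obtain ⟨w, hw⟩ : ∃ w, eval w Q ≠ 0 := by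
    by_contra! hall
    have hQ0 : Q = 0 := MvPolynomial.funext fun w => by rw [hall w, map_zero]
    have := eq_zero_of_smul_add_eq_zero hJ (a := 0) (b := 1) (c := 0) (by simp [hQ0])
    exact one_ne_zero this.2.1
  have hw' : (starRingEnd ℂ) (eval w Q) ≠ 0 := (map_ne_zero _).mpr hw
  have h₁ : a₃ + (starRingEnd ℂ) c₂ = 0 := (mul_eq_zero.mp (hrel w).1).resolve_right hw'
  have h₂ : c₂ + (starRingEnd ℂ) a₃ = 0 := by
    simpa [add_comm] using congrArg (starRingEnd ℂ) h₁
  have h₃ : a₂ + (starRingEnd ℂ) a₂ = 0 := by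
    have := (hrel w).2
    rw [h₂, zero_mul, add_zero] at this
    exact (mul_eq_zero.mp this).resolve_right hw'
  have hre : a₂.re = 0 := by
    rw [Complex.add_conj] at h₃
    have : 2 * a₂.re = 0 := by exact_mod_cast h₃
    linarith
  refine ⟨a₃, a₂.im, ?_, hB.symm, ?_⟩
  · have ha₂ : (a₂.im * I : ℂ) = a₂ := by
      conv_rhs => rw [← Complex.re_add_im a₂, hre]
      simp
    rw [ha₂, ← hA, add_comm]
  · rw [← hD, eq_neg_of_add_eq_zero_left h₂]

/-- The action of polynomial vector fields on the triple `(P, Q, R)`. -/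
def fieldDerivTriple (P Q R : MvPolynomial (Fin 3) ℂ) :
    (Fin 3 → MvPolynomial (Fin 3) ℂ) →ₗ[ℝ] (Fin 3 → MvPolynomial (Fin 3) ℂ) where
  toFun f := ![fieldDeriv f P, fieldDeriv f Q, fieldDeriv f R]
  map_add' f g := by
    funext i
    fin_cases i <;> simp [fieldDeriv, add_mul, Finset.sum_add_distrib]
  map_smul' c f := by
    funext i
    fin_cases i <;> simp [fieldDeriv, Finset.smul_sum]

theorem fieldDerivTriple_injective
    (hJ : (Matrix.of fun i j => pderiv i (![P, Q, R] j)).det ≠ 0) :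
    Function.Injective (fieldDerivTriple P Q R) := by
  refine (injective_iff_map_eq_zero _).mpr fun f hf => Matrix.eq_zero_of_vecMul_eq_zero hJ ?_
  funext i
  have := congrFun hf i
  fin_cases i <;> simpa [fieldDerivTriple, fieldDeriv, Matrix.vecMul, dotProduct] using this

/-- The three-parameter family of possible actions of `g_c` on `(P, Q, R)`. -/
def admissibleAction (Q R : MvPolynomial (Fin 3) ℂ) :
    (ℂ × ℝ) →ₗ[ℝ] (Fin 3 → MvPolynomial (Fin 3) ℂ) where
  toFun x := ![x.1 • R + (x.2 * I : ℂ) • Q, 0, -(starRingEnd ℂ) x.1 • Q]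
  map_add' x y := by
    funext i
    fin_cases i
    · simp only [Prod.fst_add, Prod.snd_add, Complex.ofReal_add, add_mul, add_smul]
      simp
      abel
    · simp
    · simp [add_smul]
      abel
  map_smul' c x := by
    funext i
    fin_cases i
    · simp [mul_assoc, mul_smul]
    · simp
    · simp [mul_smul]

theorem rank_span_gcSet_le_of_le (hP : P.IsHomogeneous p) (hQ : Q.IsHomogeneous q)
    (hR : R.IsHomogeneous r) (hdeg : p + q = 2 * r) (hpq : p ≤ q)
    (hJ : (Matrix.of fun i j => pderiv i (![P, Q, R] j)).det ≠ 0) (d : ℕ) :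
    Module.rank ℝ ↥(Submodule.span ℝ (gcSet P Q R d)) ≤ 3 := by
  have hmem : ∀ f ∈ Submodule.span ℝ (gcSet P Q R d),
      fieldDerivTriple P Q R f ∈ (admissibleAction Q R).range := by
    intro f hf
    have hle : Submodule.span ℝ (gcSet P Q R d) ≤
        (admissibleAction Q R).range.comap (fieldDerivTriple P Q R) := by
      refine Submodule.span_le.mpr fun g hg => ?_
      obtain ⟨a, t, h₀, h₁, h₂⟩ := exists_fieldDeriv_eq hP hQ hR hdeg hpq hJ hg
      refine ⟨(a, t), ?_⟩
      simp [admissibleAction, fieldDerivTriple, h₀, h₁, h₂]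
    exact hle hf
  have h₁ := LinearMap.rank_le_of_injective ((fieldDerivTriple P Q R).restrict hmem)
    fun x y hxy => Subtype.ext (fieldDerivTriple_injective hJ (congrArg Subtype.val hxy))
  have h₂ : Module.rank ℝ (admissibleAction Q R).range ≤ Module.rank ℝ (ℂ × ℝ) :=
    rank_range_le _
  refine (h₁.trans h₂).trans (le_of_eq ?_)
  rw [rank_prod', Complex.rank_real_complex, Module.rank_self]
  norm_num

theorem gcSet_swap (P Q R : MvPolynomial (Fin 3) ℂ) (d : ℕ) : gcSet P Q R d = gcSet Q P R d := by
  have hPhiD : PhiD P Q R = PhiD Q P R := by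
    funext j z
    simp only [PhiD]
    ring
  simp only [gcSet, hPhiD]

end Model

/-- For homogeneous `P, Q, R` with `deg P + deg Q = 2·deg R` and
nonvanishing Jacobian, the space `g_c` has real dimension at most `3`. -/
theorem stmt11 (P Q R : MvPolynomial (Fin 3) ℂ) (p q r : ℕ)
    (hP : P.IsHomogeneous p) (hQ : Q.IsHomogeneous q) (hR : R.IsHomogeneous r)
    (hdeg : p + q = 2 * r)
    (hJ : (Matrix.of fun i j => pderiv i (![P, Q, R] j)).det ≠ 0) :
    Module.rank ℝ ↥(Submodule.span ℝ (gcSet P Q R (p + q))) ≤ 3 := by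
  rcases le_total p q with hpq | hqp
  · exact rank_span_gcSet_le_of_le hP hQ hR hdeg hpq hJ _
  · rw [gcSet_swap]
    refine rank_span_gcSet_le_of_le hQ hP hR (by omega) hqp (fun h => hJ ?_) _
    rw [Matrix.det_fin_three] at h ⊢
    simp only [Matrix.of_apply, Matrix.cons_val] at h ⊢
    linear_combination -h
end
end

section
/- Let P = z₁z₂z₃², Q = z₁²z₂z₃³, R = z₁z₂z₃³ (so d = deg P + deg Q = 10 and deg P + deg Q = 2·deg R). Then the real vector space g_c has dimension exactly 3. -/
open MvPolynomial Complex

noncomputable section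

/-- A polynomial in `z` and `w` that vanishes whenever `w` is the conjugate of `z` vanishes
identically. -/
theorem eval_eq_zero_of_eval_conj_eq_zero {σ : Type*} (p : MvPolynomial (σ ⊕ σ) ℂ)
    (h : ∀ z : σ → ℂ, eval (Sum.elim z fun j => (starRingEnd ℂ) (z j)) p = 0)
    (z w : σ → ℂ) : eval (Sum.elim z w) p = 0 := by
  let q : MvPolynomial (σ ⊕ σ) ℂ := bind₁ (Sum.elim
    (fun j => X (Sum.inl j) + C I * X (Sum.inr j))
    (fun j => X (Sum.inl j) - C I * X (Sum.inr j))) p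
  have hq (x : σ ⊕ σ → ℂ) : eval x q = eval (Sum.elim
      (fun j => x (Sum.inl j) + I * x (Sum.inr j))
      (fun j => x (Sum.inl j) - I * x (Sum.inr j))) p := by
    change eval₂Hom _ _ (bind₁ _ p) = _
    rw [eval₂Hom_bind₁]
    change _ = eval₂Hom _ _ p
    congr 2
    funext i
    rcases i with j | j <;> simp
  have hq0 : q = 0 := by
    refine funext_set (fun _ => Set.range ((↑) : ℝ → ℂ))
      (fun _ => Set.infinite_range_of_injective Complex.ofReal_injective) fun x hx => ?_
    choose r hr using fun i => hx i (Set.mem_univ i)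
    rw [hq, map_zero, ← h fun j => x (Sum.inl j) + I * x (Sum.inr j)]
    congr 2
    funext i
    rcases i with j | j <;> simp [← hr, sub_eq_add_neg]
  have key := hq (Sum.elim (fun j => (z j + w j) / 2) (fun j => -I * (z j - w j) / 2))
  rw [hq0, map_zero] at key
  rw [key]
  congr 2
  funext i
  rcases i with j | j <;> simp <;> ring_nf <;> simp <;> ring

/-- The polarized form of a sum of products of polynomials and conjugate polynomials. -/
theorem polarization_s12 {σ ι : Type*} [Fintype ι] (A B : ι → MvPolynomial σ ℂ)
    (h : ∀ z : σ → ℂ, (∑ i, eval z (A i) * (starRingEnd ℂ) (eval z (B i))).re = 0)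
    (z w : σ → ℂ) :
    ∑ i, (eval z (A i) * eval w (map (starRingEnd ℂ) (B i)) +
      eval w (map (starRingEnd ℂ) (A i)) * eval z (B i)) = 0 := by
  have hc (z : σ → ℂ) (p : MvPolynomial σ ℂ) :
      eval (fun j => (starRingEnd ℂ) (z j)) (map (starRingEnd ℂ) p) =
        (starRingEnd ℂ) (eval z p) := by
    rw [eval_map]
    exact (eval₂_comp_left (starRingEnd ℂ) (RingHom.id ℂ) z p).symm
  have key := eval_eq_zero_of_eval_conj_eq_zero
    (∑ i, (rename Sum.inl (A i) * rename Sum.inr (map (starRingEnd ℂ) (B i)) +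
      rename Sum.inr (map (starRingEnd ℂ) (A i)) * rename Sum.inl (B i))) (fun z => ?_) z w
  · simpa [eval_rename, Function.comp_def] using key
  · simp only [map_sum, map_add, map_mul, eval_rename, Function.comp_def, Sum.elim_inl,
      Sum.elim_inr, hc]
    have hz := h z
    have h2 := Complex.add_conj (∑ i, eval z (A i) * (starRingEnd ℂ) (eval z (B i)))
    rw [hz] at h2
    simpa [Finset.sum_add_distrib] using h2

/-- Low-degree homogeneous components of a product vanish. -/
theorem homogeneousComponent_mul_eq_zero {σ R : Type*} [CommSemiring R] {p q : MvPolynomial σ R}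
    {a b n : ℕ} (hp : ∀ m ∈ p.support, a ≤ m.degree) (hq : q.IsHomogeneous b) (hn : n < a + b) :
    homogeneousComponent n (p * q) = 0 := by
  classical
  refine homogeneousComponent_eq_zero' _ _ fun m hm => ?_
  obtain ⟨x, hx, y, hy, rfl⟩ := Finset.mem_add.1 (support_mul p q hm)
  have h1 := hp x hx
  have h2 : y.degree = b := by
    rw [Finsupp.degree_eq_weight_one]
    exact hq (mem_support_iff.1 hy)
  rw [map_add]
  omega

/-- The vector field with `X P = a R + b Q`, `X Q = 0` and `X R = c Q`, where
`P = z₁z₂z₃²`, `Q = z₁²z₂z₃³` and `R = z₁z₂z₃³`. -/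
def gcField (a b c : ℂ) : Fin 3 → MvPolynomial (Fin 3) ℂ :=
  ![-(C c * X 0 ^ 2),
    C (3 * a) * (X 1 * X 2) + C (3 * b) * (X 0 * X 1 * X 2) - C c * (X 0 * X 1),
    C c * (X 0 * X 2) - C a * X 2 ^ 2 - C b * (X 0 * X 2 ^ 2)]

/-- A real basis of `g_c`. -/
def gcBasis : Fin 3 → Fin 3 → MvPolynomial (Fin 3) ℂ :=
  ![gcField (-1) 0 1, gcField I 0 I, gcField 0 I 0]

theorem sum_smul_gcBasis (r : Fin 3 → ℝ) :
    ∑ i, r i • gcBasis i = gcField (-r 0 + r 1 * I) (r 2 * I) (r 0 + r 1 * I) := by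
  have hsmul (t : ℝ) (p : MvPolynomial (Fin 3) ℂ) : t • p = C (t : ℂ) * p := by
    rw [← smul_eq_C_mul, Complex.coe_smul]
  funext j
  fin_cases j <;> simp [Fin.sum_univ_three, gcBasis, gcField, hsmul] <;> ring

theorem linearIndependent_gcBasis : LinearIndependent ℝ gcBasis := by
  rw [Fintype.linearIndependent_iff]
  intro r hr
  rw [sum_smul_gcBasis] at hr
  have h0 := congrArg (eval fun _ => (1 : ℂ)) (congrFun hr 0)
  have h1 := congrArg (eval fun _ => (1 : ℂ)) (congrFun hr 1)
  simp [gcField, Complex.ext_iff] at h0 h1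
  intro i
  fin_cases i <;> simp <;> linarith [h0.1, h0.2, h1.1, h1.2]

theorem degree_of_mem_support_gcField (a b c : ℂ) (j : Fin 3) (m : Fin 3 →₀ ℕ)
    (hm : m ∈ (gcField a b c j).support) : 2 ≤ m.degree ∧ m.degree ≤ 3 := by
  have hX (i : Fin 3) := isHomogeneous_X ℂ i
  have hdeg {p : MvPolynomial (Fin 3) ℂ} {n : ℕ} (hp : p.IsHomogeneous n) (hn : m.degree ≠ n) :
      coeff m p = 0 :=
    hp.coeff_eq_zero hn
  by_contra hcon
  have h2 : m.degree ≠ 2 := by omega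
  have h3 : m.degree ≠ 3 := by omega
  refine mem_support_iff.1 hm ?_
  fin_cases j
  · simp [gcField, hdeg ((hX 0).pow 2) h2]
  · simp [gcField, mul_assoc, hdeg ((hX 1).mul (hX 2)) h2,
      hdeg ((hX 0).mul ((hX 1).mul (hX 2))) h3, hdeg ((hX 0).mul (hX 1)) h2]
  · simp [gcField, hdeg ((hX 0).mul (hX 2)) h2, hdeg ((hX 2).pow 2) h2,
      hdeg ((hX 0).mul ((hX 2).pow 2)) h3]

theorem sum_gcField_mul_PhiD (a b c : ℂ) (z : Fin 3 → ℂ) :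
    ∑ j, eval z (gcField a b c j) * PhiD (X 0 * X 1 * X 2 ^ 2)
      (X 0 ^ 2 * X 1 * X 2 ^ 3) (X 0 * X 1 * X 2 ^ 3) j z =
    (a * (z 0 * z 1 * z 2 ^ 3) + b * (z 0 ^ 2 * z 1 * z 2 ^ 3)) *
      (starRingEnd ℂ) (z 0 ^ 2 * z 1 * z 2 ^ 3) +
    c * (z 0 ^ 2 * z 1 * z 2 ^ 3) * (starRingEnd ℂ) (z 0 * z 1 * z 2 ^ 3) := by
  simp [Fin.sum_univ_three, gcField, PhiD, pderiv_X, Pi.single_apply]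
  ring

theorem gcBasis_mem_gcSet (i : Fin 3) : gcBasis i ∈ gcSet (X 0 * X 1 * X 2 ^ 2)
    (X 0 ^ 2 * X 1 * X 2 ^ 3) (X 0 * X 1 * X 2 ^ 3) 10 := by
  obtain ⟨a, b, c, h, hb, hac⟩ : ∃ a b c, gcBasis i = gcField a b c ∧
      (starRingEnd ℂ) b = -b ∧ (starRingEnd ℂ) a = -c := by
    fin_cases i
    · exact ⟨-1, 0, 1, rfl, by simp, by simp⟩
    · exact ⟨I, 0, I, rfl, by simp, by simp⟩
    · exact ⟨0, I, 0, rfl, by simp, by simp⟩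
  rw [h]
  refine ⟨fun j m hm => ?_, fun z => ?_⟩
  · obtain ⟨h2, h3⟩ := degree_of_mem_support_gcField a b c j m hm
    exact ⟨h2, h3.trans (by norm_num)⟩
  · have hca : (starRingEnd ℂ) c = -a := by
      rw [← neg_eq_iff_eq_neg.2 hac, map_neg, Complex.conj_conj]
    have hre (x : ℂ) (hx : x + (starRingEnd ℂ) x = 0) : x.re = 0 := by
      simpa [Complex.add_conj] using hx
    refine hre _ ?_
    rw [sum_gcField_mul_PhiD]
    simp only [map_add, map_mul, Complex.conj_conj, hb, hac, hca]
    ring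

/-- A sum `∑ Aᵢ(z) conj Bᵢ(z)` with vanishing real part, where the conjugate polynomials `Bᵢ`
are linearly independent when evaluated at suitable points, forces each `Aᵢ` into the span of
the `Bᵢ`. -/
theorem exists_eq_sum_C_mul {σ ι : Type*} [Fintype ι] [DecidableEq ι] (A B : ι → MvPolynomial σ ℂ)
    (h : ∀ z : σ → ℂ, (∑ i, eval z (A i) * (starRingEnd ℂ) (eval z (B i))).re = 0)
    (w : ι → σ → ℂ)
    (hw : IsUnit (Matrix.of fun k i => eval (w k) (map (starRingEnd ℂ) (B i))).det) (i : ι) :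
    ∃ t : ι → ℂ, A i = ∑ l, C (t l) * B l := by
  set M : Matrix ι ι ℂ := Matrix.of fun k i => eval (w k) (map (starRingEnd ℂ) (B i))
  let N : Matrix ι ι ℂ := Matrix.of fun k i => eval (w k) (map (starRingEnd ℂ) (A i))
  refine ⟨fun l => -(M⁻¹ * N) i l, MvPolynomial.funext fun z => ?_⟩
  have key : M.mulVec (fun i => eval z (A i)) = -N.mulVec (fun i => eval z (B i)) := by
    funext k
    have := polarization_s12 A B h z (w k)
    rw [Finset.sum_add_distrib] at this
    simp only [Matrix.mulVec, dotProduct, Pi.neg_apply, M, N, Matrix.of_apply]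
    rw [← eq_neg_iff_add_eq_zero] at this
    simpa only [mul_comm] using this
  have h2 := congrArg (M⁻¹.mulVec) key
  rw [Matrix.mulVec_mulVec, Matrix.nonsing_inv_mul _ hw, Matrix.one_mulVec, Matrix.mulVec_neg,
    Matrix.mulVec_mulVec] at h2
  simpa [Matrix.mulVec, dotProduct] using congrFun h2 i

/-- `P`, `Q` and `R` are homogeneous of different degrees. -/
theorem coeffs_eq_zero_of_component_eq_zero (a b c : ℂ) (n : ℕ)
    (h : homogeneousComponent n (C a * (X 0 * X 1 * X 2 ^ 2) + C b * (X 0 ^ 2 * X 1 * X 2 ^ 3) +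
      C c * (X 0 * X 1 * X 2 ^ 3) : MvPolynomial (Fin 3) ℂ) = 0) :
    (n = 4 → a = 0) ∧ (n = 6 → b = 0) ∧ (n = 5 → c = 0) := by
  have hX (i : Fin 3) := isHomogeneous_X ℂ i
  have hP : (X 0 * X 1 * X 2 ^ 2 : MvPolynomial (Fin 3) ℂ) ∈ homogeneousSubmodule (Fin 3) ℂ 4 :=
    ((hX 0).mul (hX 1)).mul ((hX 2).pow 2)
  have hQ : (X 0 ^ 2 * X 1 * X 2 ^ 3 : MvPolynomial (Fin 3) ℂ) ∈
    homogeneousSubmodule (Fin 3) ℂ 6 := (((hX 0).pow 2).mul (hX 1)).mul ((hX 2).pow 3)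
  have hR : (X 0 * X 1 * X 2 ^ 3 : MvPolynomial (Fin 3) ℂ) ∈ homogeneousSubmodule (Fin 3) ℂ 5 :=
    ((hX 0).mul (hX 1)).mul ((hX 2).pow 3)
  have h1 := congrArg (eval fun _ => (1 : ℂ)) h
  rw [map_add (homogeneousComponent n), map_add (homogeneousComponent n),
    homogeneousComponent_C_mul, homogeneousComponent_C_mul, homogeneousComponent_C_mul,
    homogeneousComponent_of_mem hP, homogeneousComponent_of_mem hQ,
    homogeneousComponent_of_mem hR] at h1
  refine ⟨?_, ?_, ?_⟩ <;> rintro rfl <;> simpa using h1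

theorem exists_eq_gcField {f : Fin 3 → MvPolynomial (Fin 3) ℂ}
    (hf : f ∈ gcSet (X 0 * X 1 * X 2 ^ 2) (X 0 ^ 2 * X 1 * X 2 ^ 3) (X 0 * X 1 * X 2 ^ 3) 10) :
    ∃ a b c, f = gcField a b c := by
  obtain ⟨hdeg, hre⟩ := hf
  have hf2 (j : Fin 3) (m) (hm : m ∈ (f j).support) : 2 ≤ m.degree := (hdeg j m hm).1
  have hX (i : Fin 3) := isHomogeneous_X ℂ i
  let D (p : MvPolynomial (Fin 3) ℂ) := ∑ j, f j * pderiv j p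
  have hD {p : MvPolynomial (Fin 3) ℂ} {d n : ℕ} (hp : p.IsHomogeneous (d + 1))
      (hn : n < d + 2) : homogeneousComponent n (D p) = 0 := by
    rw [map_sum]
    exact Finset.sum_eq_zero fun j _ =>
      homogeneousComponent_mul_eq_zero (hf2 j) hp.pderiv (by simpa [add_comm] using hn)
  let B : Fin 3 → MvPolynomial (Fin 3) ℂ :=
    ![X 0 * X 1 * X 2 ^ 2, X 0 ^ 2 * X 1 * X 2 ^ 3, X 0 * X 1 * X 2 ^ 3]
  let A : Fin 3 → MvPolynomial (Fin 3) ℂ := ![D (B 1), D (B 0), D (B 2)]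
  have hAB (z : Fin 3 → ℂ) : (∑ i, eval z (A i) * (starRingEnd ℂ) (eval z (B i))).re = 0 := by
    rw [← hre z]
    congr 1
    simp only [Fin.sum_univ_three, PhiD, A, B, D, Matrix.cons_val, map_add, map_mul]
    ring
  have hspan := exists_eq_sum_C_mul A B hAB ![![1, 1, 1], ![2, 1, 1], ![1, 1, 2]] (by
    simp [Matrix.det_fin_three, B]
    norm_num)
  have hP : (B 0).IsHomogeneous (3 + 1) := ((hX 0).mul (hX 1)).mul ((hX 2).pow 2)
  have hQ : (B 1).IsHomogeneous (5 + 1) := (((hX 0).pow 2).mul (hX 1)).mul ((hX 2).pow 3)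
  have hR : (B 2).IsHomogeneous (4 + 1) := ((hX 0).mul (hX 1)).mul ((hX 2).pow 3)
  obtain ⟨q, hq⟩ := hspan 0
  obtain ⟨p, hp⟩ := hspan 1
  obtain ⟨r, hr⟩ := hspan 2
  simp only [A, Fin.sum_univ_three, Matrix.cons_val] at hq hp hr
  have hq' (n : ℕ) (hn : n < 7) :=
    coeffs_eq_zero_of_component_eq_zero _ _ _ n (by rw [← hD hQ hn, hq]; rfl)
  have hp' (n : ℕ) (hn : n < 5) :=
    coeffs_eq_zero_of_component_eq_zero _ _ _ n (by rw [← hD hP hn, hp]; rfl)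
  have hr' (n : ℕ) (hn : n < 6) :=
    coeffs_eq_zero_of_component_eq_zero _ _ _ n (by rw [← hD hR hn, hr]; rfl)
  rw [(hq' 4 (by norm_num)).1 rfl, (hq' 6 (by norm_num)).2.1 rfl,
    (hq' 5 (by norm_num)).2.2 rfl] at hq
  rw [(hp' 4 (by norm_num)).1 rfl] at hp
  rw [(hr' 4 (by norm_num)).1 rfl, (hr' 5 (by norm_num)).2.2 rfl] at hr
  simp [D, B, Fin.sum_univ_three, pderiv_X] at hq hp hr
  have h0 : f 0 = gcField (p 2) (p 1) (r 1) 0 := by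
    have hne : (X 0 * X 1 * X 2 ^ 3 : MvPolynomial (Fin 3) ℂ) ≠ 0 := by simp
    refine mul_left_cancel₀ hne ?_
    simp only [gcField, Matrix.cons_val]
    linear_combination hq - X 0 * hr
  have h2 : f 2 = gcField (p 2) (p 1) (r 1) 2 := by
    have hne : (X 0 * X 1 * X 2 ^ 2 : MvPolynomial (Fin 3) ℂ) ≠ 0 := by simp
    refine mul_left_cancel₀ hne ?_
    simp only [gcField, Matrix.cons_val]
    linear_combination hr - X 2 * hp
  have h1 : f 1 = gcField (p 2) (p 1) (r 1) 1 := by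
    have hne : (X 0 * X 2 ^ 3 : MvPolynomial (Fin 3) ℂ) ≠ 0 := by simp
    refine mul_left_cancel₀ hne ?_
    simp only [gcField, Matrix.cons_val, map_mul] at h0 h2 ⊢
    have h3 : (C 3 : MvPolynomial (Fin 3) ℂ) = 3 := map_ofNat C 3
    rw [h3]
    linear_combination hr - X 1 * X 2 ^ 3 * h0 - 3 * X 0 * X 1 * X 2 ^ 2 * h2
  refine ⟨p 2, p 1, r 1, ?_⟩
  funext j
  fin_cases j
  exacts [h0, h1, h2]

theorem mem_span_gcBasis {f : Fin 3 → MvPolynomial (Fin 3) ℂ}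
    (hf : f ∈ gcSet (X 0 * X 1 * X 2 ^ 2) (X 0 ^ 2 * X 1 * X 2 ^ 3) (X 0 * X 1 * X 2 ^ 3) 10) :
    f ∈ Submodule.span ℝ (Set.range gcBasis) := by
  obtain ⟨a, b, c, rfl⟩ := exists_eq_gcField hf
  have hre (z : Fin 3 → ℂ) := hf.2 z
  simp only [sum_gcField_mul_PhiD] at hre
  have e1 := hre ![1, 1, 1]
  have e2 := hre ![2, 1, 1]
  have e3 := hre ![I, 1, 1]
  simp [pow_succ] at e1 e2 e3
  rw [Submodule.mem_span_range_iff_exists_fun]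
  refine ⟨![c.re, c.im, b.im], ?_⟩
  rw [sum_smul_gcBasis]
  congr 1 <;> apply Complex.ext <;> simp <;> linarith

/-- For `P = z₁z₂z₃²`, `Q = z₁²z₂z₃³`, `R = z₁z₂z₃³` (so `d = 10`),
the space `g_c` has real dimension exactly `3`. -/
theorem stmt12 :
    Module.rank ℝ ↥(Submodule.span ℝ (gcSet (X 0 * X 1 * X 2 ^ 2)
      (X 0 ^ 2 * X 1 * X 2 ^ 3) (X 0 * X 1 * X 2 ^ 3) 10)) = 3 := by
  have hspan : Submodule.span ℝ (gcSet (X 0 * X 1 * X 2 ^ 2)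
      (X 0 ^ 2 * X 1 * X 2 ^ 3) (X 0 * X 1 * X 2 ^ 3) 10) =
      Submodule.span ℝ (Set.range gcBasis) :=
    le_antisymm (Submodule.span_le.2 fun _ hf => mem_span_gcBasis hf)
      (Submodule.span_mono (Set.range_subset_iff.2 gcBasis_mem_gcSet))
  rw [hspan, rank_span linearIndependent_gcBasis,
    Cardinal.mk_range_eq _ linearIndependent_gcBasis.injective, Cardinal.mk_fin]
  norm_num
end
end
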